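/- arXiv:0905.0412 — 4 statements merged into one kernel-verified Lean document; each statement's English description precedes it below -/
import Mathlib

section
/- For indeterminates u, q and integers i ≥ j ≥ k, define A_{ij}(u,v) = (u/v)^j · ((u/v;q)_{i-j}/(q;q)_{i-j}) · ((u;q)_{i+j}/(v q;q)_{i+j}) · (1-v q^{2j})/(1-v). Then the infinite lower-triangular matrices A(u,v) and A(v,u) are mutually inverse: ∑_{j with i ≥ j ≥ k} A_{ij}(u,v) A_{jk}(v,u) = δ_{ik}. -/
open Finset

/-- The q-Pochhammer symbol extended to integer index:
`(x;q)_k = ∏_{j=0}^{k-1}(1-xq^j)` for `k ≥ 0`, and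
`(x;q)_{-m} = 1/∏_{j=1}^{m}(1-xq^{-j})` for `m > 0`. -/
noncomputable def qPochZ {F : Type*} [Field F] (x q : F) (k : ℤ) : F :=
  if 0 ≤ k then ∏ j ∈ Finset.range k.toNat, (1 - x * q ^ (j : ℤ))
  else (∏ j ∈ Finset.range (-k).toNat, (1 - x * q ^ (-(j : ℤ) - 1)))⁻¹

/-- Bressoud's matrix entries
`A_{ij}(u,v) = (u/v)^j ((u/v;q)_{i-j}/(q;q)_{i-j}) ((u;q)_{i+j}/(vq;q)_{i+j})
  (1-vq^{2j})/(1-v)`. -/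
noncomputable def bressoudA {F : Type*} [Field F] (q u v : F) (i j : ℤ) : F :=
  (u / v) ^ j * (qPochZ (u / v) q (i - j) / qPochZ q q (i - j)) *
    (qPochZ u q (i + j) / qPochZ (v * q) q (i + j)) *
    ((1 - v * q ^ (2 * j)) / (1 - v))

/-!
Put `C = (1 - q^{i-k}) (1 - u q^{i+k})` and `T_j = A_{ij}(u,v) A_{jk}(v,u)`. The sum of the `T_j`
is Gosper-summable: `C * ∑_{k ≤ j ≤ n} T_j` is a `q`-hypergeometric term `S_n` carrying a factor
`1 - q^{i-n}`, so it vanishes at `n = i`, while `C ≠ 0` for `i ≠ k`. After division by the common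
factor of `T_j`, `S_j` and `S_{j-1}`, the recursion `S_{j-1} + C * T_j = S_j` is a polynomial
identity.
-/

section QPochhammer

variable {F : Type*} [Field F] {x q : F} {k : ℤ}

theorem qPochZ_zero : qPochZ x q 0 = 1 := by
  simp [qPochZ]

theorem qPochZ_natCast (n : ℕ) : qPochZ x q n = ∏ j ∈ range n, (1 - x * q ^ j) := by
  simp [qPochZ]

theorem qPochZ_neg_natCast (n : ℕ) :
    qPochZ x q (-n) = (∏ j ∈ range n, (1 - x * q ^ (-(j : ℤ) - 1)))⁻¹ := by
  cases n with
  | zero => simp [qPochZ]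
  | succ n => rw [qPochZ, if_neg (by omega), neg_neg, Int.toNat_natCast]

theorem qPochZ_add_one (h : 0 ≤ k ∨ x * q ^ k ≠ 1) :
    qPochZ x q (k + 1) = qPochZ x q k * (1 - x * q ^ k) := by
  rcases le_or_gt 0 k with hk | hk
  · lift k to ℕ using hk
    rw [← Nat.cast_succ, qPochZ_natCast, qPochZ_natCast, prod_range_succ, zpow_natCast]
  · obtain ⟨n, rfl⟩ : ∃ n : ℕ, k = -((n + 1 : ℕ) : ℤ) := ⟨(-k - 1).toNat, by omega⟩
    have hfactor : 1 - x * q ^ (-(n : ℤ) - 1) ≠ 0 := by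
      rw [← neg_add', ← Nat.cast_succ]
      exact sub_ne_zero.2 (h.resolve_left hk.not_ge).symm
    rw [qPochZ_neg_natCast, prod_range_succ, Nat.cast_succ, neg_add', sub_add_cancel,
      qPochZ_neg_natCast, mul_inv, inv_mul_cancel_right₀ hfactor]

theorem inv_qPochZ_eq_mul_inv_add_one (h : x * q ^ k ≠ 1) :
    (qPochZ x q k)⁻¹ = (1 - x * q ^ k) * (qPochZ x q (k + 1))⁻¹ := by
  rw [qPochZ_add_one (.inr h), mul_inv, mul_left_comm, mul_inv_cancel₀ (sub_ne_zero.2 h.symm),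
    mul_one]

theorem qPochZ_add_one' (hq : q ≠ 0) (h : 0 ≤ k ∨ x ≠ 1) :
    qPochZ x q (k + 1) = (1 - x) * qPochZ (x * q) q k := by
  rcases le_or_gt 0 k with hk | hk
  · lift k to ℕ using hk
    rw [← Nat.cast_succ, qPochZ_natCast, qPochZ_natCast, prod_range_succ', pow_zero, mul_one,
      mul_comm]
    simp only [pow_succ', mul_assoc]
  · obtain ⟨n, rfl⟩ : ∃ n : ℕ, k = -((n + 1 : ℕ) : ℤ) := ⟨(-k - 1).toNat, by omega⟩
    have hx : 1 - x ≠ 0 := sub_ne_zero.2 (h.resolve_left hk.not_ge).symm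
    have hshift (m : ℤ) : x * q * q ^ (m - 1) = x * q ^ m := by
      rw [mul_assoc, ← zpow_one_add₀ hq, add_sub_cancel]
    simp only [qPochZ_neg_natCast, hshift]
    rw [prod_range_succ', Nat.cast_succ, neg_add', sub_add_cancel, qPochZ_neg_natCast]
    simp only [Nat.cast_zero, neg_zero, zpow_zero, mul_one, Nat.cast_succ, neg_add']
    rw [mul_inv, mul_comm, inv_mul_cancel_right₀ hx]

theorem qPochZ_ne_zero (h : ∀ m : ℤ, x * q ^ m ≠ 1) : qPochZ x q k ≠ 0 := by
  unfold qPochZ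
  split_ifs
  · exact prod_ne_zero_iff.2 fun j _ => sub_ne_zero.2 (h j).symm
  · exact inv_ne_zero (prod_ne_zero_iff.2 fun j _ => sub_ne_zero.2 (h _).symm)

end QPochhammer

section Bressoud

variable {F : Type*} [Field F] {q u v : F} {i j k n : ℤ}

theorem bressoudA_eq (hq0 : q ≠ 0) (hv1 : v ≠ 1) :
    bressoudA q u v i j =
      (u / v) ^ j * (qPochZ (u / v) q (i - j) / qPochZ q q (i - j)) *
        (qPochZ u q (i + j) / qPochZ v q (i + j + 1)) * (1 - v * q ^ (2 * j)) := by
  rw [bressoudA, qPochZ_add_one' hq0 (.inr hv1)]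
  have : 1 - v ≠ 0 := sub_ne_zero.2 hv1.symm
  field_simp

theorem bressoudA_mul_bressoudA (hq0 : q ≠ 0) (hu0 : u ≠ 0) (hv0 : v ≠ 0)
    (hu1 : u ≠ 1) (hv1 : v ≠ 1) :
    bressoudA q u v i j * bressoudA q v u j k =
      (u / v) ^ (j - k) * qPochZ (v / u) q (j - k) / qPochZ q q (j - k) *
        (qPochZ (u / v) q (i - j) / qPochZ q q (i - j)) *
        (qPochZ u q (i + j) / qPochZ u q (j + k + 1)) *
        (qPochZ v q (j + k) / qPochZ v q (i + j + 1)) *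
        ((1 - v * q ^ (2 * j)) * (1 - u * q ^ (2 * k))) := by
  have hpow : (u / v) ^ (j - k) = (u / v) ^ j * (v / u) ^ k := by
    rw [zpow_sub₀ (div_ne_zero hu0 hv0), div_eq_mul_inv, ← inv_zpow, inv_div]
  rw [bressoudA_eq hq0 hv1, bressoudA_eq hq0 hu1, hpow]
  ring

theorem bressoudA_self_mul_bressoudA_self (hq0 : q ≠ 0) (hu0 : u ≠ 0) (hv0 : v ≠ 0)
    (hu : ∀ m : ℤ, u * q ^ m ≠ 1) (hv : ∀ m : ℤ, v * q ^ m ≠ 1) :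
    bressoudA q u v i i * bressoudA q v u i i = 1 := by
  have hU : qPochZ u q (i + i) * (1 - u * q ^ (i + i)) ≠ 0 :=
    mul_ne_zero (qPochZ_ne_zero hu) (sub_ne_zero.2 (hu _).symm)
  have hV : qPochZ v q (i + i) * (1 - v * q ^ (i + i)) ≠ 0 :=
    mul_ne_zero (qPochZ_ne_zero hv) (sub_ne_zero.2 (hv _).symm)
  rw [bressoudA_mul_bressoudA hq0 hu0 hv0 (by simpa using hu 0) (by simpa using hv 0),
    qPochZ_add_one (.inr (hu _)), qPochZ_add_one (.inr (hv _))]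
  simp only [sub_self, qPochZ_zero, zpow_zero, two_mul, mul_one, div_one, one_mul]
  rw [div_mul_div_comm, div_mul_eq_mul_div, div_eq_one_iff_eq (mul_ne_zero hU hV)]
  ring

/-- The closed form of `(1 - q^{i-k}) (1 - u q^{i+k}) ∑_{k ≤ j ≤ n} A_{ij}(u,v) A_{jk}(v,u)`, for
`k ≤ n ≤ i`. -/
noncomputable def bressoudPartialSum (q u v : F) (i k n : ℤ) : F :=
  (u / v) ^ (n - k) * qPochZ (v / u * q) q (n - k) / qPochZ q q (n - k) *
    (qPochZ (u / v) q (i - n) / qPochZ q q (i - n)) *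
    (qPochZ u q (i + n + 1) / qPochZ u q (n + k + 1)) *
    (qPochZ v q (n + k + 1) / qPochZ v q (i + n + 1)) *
    ((1 - q ^ (i - n)) * (1 - u * q ^ (2 * k)))

theorem bressoudPartialSum_right : bressoudPartialSum q u v i k i = 0 := by
  simp [bressoudPartialSum]

theorem bressoudPartialSum_left (hq0 : q ≠ 0) (hu0 : u ≠ 0) (hv0 : v ≠ 0)
    (hu : ∀ m : ℤ, u * q ^ m ≠ 1) (hv : ∀ m : ℤ, v * q ^ m ≠ 1) :
    bressoudPartialSum q u v i k k =
      (1 - q ^ (i - k)) * (1 - u * q ^ (i + k)) *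
        (bressoudA q u v i k * bressoudA q v u k k) := by
  rw [bressoudA_mul_bressoudA hq0 hu0 hv0 (by simpa using hu 0) (by simpa using hv 0),
    bressoudPartialSum, qPochZ_add_one (k := i + k) (.inr (hu _)),
    qPochZ_add_one (x := v) (k := k + k) (.inr (hv _))]
  simp only [sub_self, qPochZ_zero, two_mul]
  ring

/-- The common factor of `A_{ij}(u,v) A_{jk}(v,u)` and of the closed forms of the partial sums up to
`j` and up to `j - 1`, chosen so that the cofactors are polynomials in `u`, `v`, `q ^ (i - j)`,
`q ^ (j - k)` and `q ^ (2 * k)`. -/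
noncomputable def bressoudCommonFactor (q u v : F) (i j k : ℤ) : F :=
  (u / v) ^ (j - 1 - k) * qPochZ (v / u * q) q (j - 1 - k) / qPochZ q q (j - k) *
    (qPochZ (u / v) q (i - j) / qPochZ q q (i - j)) *
    (qPochZ u q (i + j) / qPochZ u q (j + k + 1)) *
    (qPochZ v q (j + k) / qPochZ v q (i + j + 1)) *
    ((1 - u * q ^ (2 * k)) / v)

theorem bressoudA_mul_bressoudA_eq_commonFactor_mul (hq0 : q ≠ 0) (hu0 : u ≠ 0) (hv0 : v ≠ 0)
    (hu1 : u ≠ 1) (hv1 : v ≠ 1) (hkj : k < j) :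
    bressoudA q u v i j * bressoudA q v u j k =
      bressoudCommonFactor q u v i j k * ((u - v) * (1 - v * q ^ (2 * j))) := by
  have hshift : (u / v) ^ (j - k) * qPochZ (v / u) q (j - k) =
      (u / v) ^ (j - 1 - k) * qPochZ (v / u * q) q (j - 1 - k) * ((u - v) / v) := by
    rw [show j - k = j - 1 - k + 1 by ring, zpow_add_one₀ (div_ne_zero hu0 hv0),
      qPochZ_add_one' hq0 (.inl (by omega))]
    field_simp
  rw [bressoudA_mul_bressoudA hq0 hu0 hv0 hu1 hv1, bressoudCommonFactor, hshift]
  ring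

theorem bressoudPartialSum_eq_commonFactor_mul (hq0 : q ≠ 0) (hu0 : u ≠ 0) (hv0 : v ≠ 0)
    (hu : ∀ m : ℤ, u * q ^ m ≠ 1) (hv : ∀ m : ℤ, v * q ^ m ≠ 1) (hkj : k < j) :
    bressoudPartialSum q u v i k j =
      bressoudCommonFactor q u v i j k *
        ((u - v * q ^ (j - k)) * (1 - q ^ (i - j)) * (1 - u * q ^ (i + j)) *
          (1 - v * q ^ (j + k))) := by
  have hshift : (u / v) ^ (j - k) * qPochZ (v / u * q) q (j - k) =
      (u / v) ^ (j - 1 - k) * qPochZ (v / u * q) q (j - 1 - k) *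
        ((u - v * q ^ (j - k)) / v) := by
    rw [show j - k = j - 1 - k + 1 by ring, zpow_add_one₀ (div_ne_zero hu0 hv0),
      qPochZ_add_one (.inl (by omega)), zpow_add_one₀ hq0]
    field_simp
  rw [bressoudPartialSum, bressoudCommonFactor, hshift,
    qPochZ_add_one (k := i + j) (.inr (hu _)), qPochZ_add_one (x := v) (k := j + k) (.inr (hv _))]
  ring

theorem bressoudPartialSum_sub_one_eq_commonFactor_mul (hq0 : q ≠ 0) (hv0 : v ≠ 0)
    (hq : ∀ m : ℤ, m ≠ 0 → q ^ m ≠ 1) (hu : ∀ m : ℤ, u * q ^ m ≠ 1)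
    (hv : ∀ m : ℤ, v * q ^ m ≠ 1) (hkj : k < j) (hji : j ≤ i) :
    bressoudPartialSum q u v i k (j - 1) =
      bressoudCommonFactor q u v i j k *
        ((v - u * q ^ (i - j)) * (1 - q ^ (j - k)) * (1 - u * q ^ (j + k)) *
          (1 - v * q ^ (i + j))) := by
  have hx : qPochZ (u / v) q (i - j + 1) =
      qPochZ (u / v) q (i - j) * ((v - u * q ^ (i - j)) / v) := by
    rw [qPochZ_add_one (.inl (by omega))]
    field_simp
  have hqij : (qPochZ q q (i - j))⁻¹ = (1 - q ^ (i - j + 1)) * (qPochZ q q (i - j + 1))⁻¹ := by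
    rw [zpow_add_one₀ hq0, mul_comm _ q]
    refine inv_qPochZ_eq_mul_inv_add_one ?_
    rw [← zpow_one_add₀ hq0]
    exact hq _ (by omega)
  have hqjk : (qPochZ q q (j - 1 - k))⁻¹ = (1 - q ^ (j - k)) * (qPochZ q q (j - k))⁻¹ := by
    rw [show j - k = j - 1 - k + 1 by ring, zpow_add_one₀ hq0, mul_comm _ q]
    refine inv_qPochZ_eq_mul_inv_add_one ?_
    rw [← zpow_one_add₀ hq0]
    exact hq _ (by omega)
  simp only [bressoudPartialSum, bressoudCommonFactor, div_eq_mul_inv (qPochZ _ _ _),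
    div_eq_mul_inv (_ * qPochZ _ _ _)]
  rw [show i - (j - 1) = i - j + 1 by ring, show i + (j - 1) + 1 = i + j by ring,
    show j - 1 + k + 1 = j + k by ring, hx, hqij, hqjk,
    inv_qPochZ_eq_mul_inv_add_one (hu (j + k)), inv_qPochZ_eq_mul_inv_add_one (hv (i + j))]
  ring

theorem bressoud_telescoping_identity {R : Type*} [CommRing R] (u v a b c : R) :
    (v - u * a) * (1 - b) * (1 - u * (b * c)) * (1 - v * (a * b ^ 2 * c)) +
        (1 - a * b) * (1 - u * (a * b * c)) * ((u - v) * (1 - v * (b ^ 2 * c))) =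
      (u - v * b) * (1 - a) * (1 - u * (a * b ^ 2 * c)) * (1 - v * (b * c)) := by
  ring

theorem bressoudPartialSum_sub_one_add (hq0 : q ≠ 0) (hu0 : u ≠ 0) (hv0 : v ≠ 0)
    (hq : ∀ m : ℤ, m ≠ 0 → q ^ m ≠ 1) (hu : ∀ m : ℤ, u * q ^ m ≠ 1)
    (hv : ∀ m : ℤ, v * q ^ m ≠ 1) (hkj : k < j) (hji : j ≤ i) :
    bressoudPartialSum q u v i k (j - 1) +
        (1 - q ^ (i - k)) * (1 - u * q ^ (i + k)) * (bressoudA q u v i j * bressoudA q v u j k) =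
      bressoudPartialSum q u v i k j := by
  have h_i_sub_k : q ^ (i - k) = q ^ (i - j) * q ^ (j - k) := by
    rw [← zpow_add₀ hq0, sub_add_sub_cancel]
  have h_j_add_k : q ^ (j + k) = q ^ (j - k) * q ^ (2 * k) := by
    rw [← zpow_add₀ hq0]
    ring_nf
  have h_two_mul_j : q ^ (2 * j) = (q ^ (j - k)) ^ 2 * q ^ (2 * k) := by
    rw [← zpow_natCast (q ^ (j - k)), ← zpow_mul, ← zpow_add₀ hq0]
    ring_nf
  have h_i_add_k : q ^ (i + k) = q ^ (i - j) * q ^ (j - k) * q ^ (2 * k) := by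
    rw [← zpow_add₀ hq0, ← zpow_add₀ hq0]
    ring_nf
  have h_i_add_j : q ^ (i + j) = q ^ (i - j) * (q ^ (j - k)) ^ 2 * q ^ (2 * k) := by
    rw [mul_assoc, ← h_two_mul_j, ← zpow_add₀ hq0]
    ring_nf
  rw [bressoudPartialSum_sub_one_eq_commonFactor_mul hq0 hv0 hq hu hv hkj hji,
    bressoudPartialSum_eq_commonFactor_mul hq0 hu0 hv0 hu hv hkj,
    bressoudA_mul_bressoudA_eq_commonFactor_mul hq0 hu0 hv0 (by simpa using hu 0)
      (by simpa using hv 0) hkj,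
    h_i_sub_k, h_j_add_k, h_two_mul_j, h_i_add_k, h_i_add_j]
  linear_combination bressoudCommonFactor q u v i j k *
    bressoud_telescoping_identity u v (q ^ (i - j)) (q ^ (j - k)) (q ^ (2 * k))

theorem mul_sum_bressoudA_mul_bressoudA (hq0 : q ≠ 0) (hu0 : u ≠ 0) (hv0 : v ≠ 0)
    (hq : ∀ m : ℤ, m ≠ 0 → q ^ m ≠ 1) (hu : ∀ m : ℤ, u * q ^ m ≠ 1)
    (hv : ∀ m : ℤ, v * q ^ m ≠ 1) (hkn : k ≤ n) (hni : n ≤ i) :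
    (1 - q ^ (i - k)) * (1 - u * q ^ (i + k)) *
        ∑ j ∈ Icc k n, bressoudA q u v i j * bressoudA q v u j k =
      bressoudPartialSum q u v i k n := by
  induction n, hkn using Int.leInduction with
  | base => rw [Icc_self, sum_singleton, bressoudPartialSum_left hq0 hu0 hv0 hu hv]
  | succ n hkn ih =>
    rw [← insert_Icc_right_eq_Icc_add_one (by omega), sum_insert (by simp), mul_add, add_comm,
      ih (by omega),
      ← bressoudPartialSum_sub_one_add (j := n + 1) hq0 hu0 hv0 hq hu hv (by omega) hni,
      add_sub_cancel_right]

end Bressoud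

/-- Bressoud's matrix inverse: the lower-triangular matrices `A(u,v)` and `A(v,u)`
are mutually inverse: `∑_{i ≥ j ≥ k} A_{ij}(u,v) A_{jk}(v,u) = δ_{ik}`. -/
theorem stmt1 {F : Type*} [Field F] (q u v : F)
    (hq0 : q ≠ 0) (hu0 : u ≠ 0) (hv0 : v ≠ 0)
    (hq : ∀ m : ℤ, m ≠ 0 → q ^ m ≠ 1)
    (hu : ∀ m : ℤ, u * q ^ m ≠ 1)
    (hv : ∀ m : ℤ, v * q ^ m ≠ 1)
    (i k : ℤ) :
    ∑ j ∈ Finset.Icc k i, bressoudA q u v i j * bressoudA q v u j k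
      = if i = k then 1 else 0 := by
  rcases lt_trichotomy i k with hik | rfl | hik
  · rw [Icc_eq_empty hik.not_ge, sum_empty, if_neg hik.ne]
  · rw [Icc_self, sum_singleton, if_pos rfl, bressoudA_self_mul_bressoudA_self hq0 hu0 hv0 hu hv]
  · have hfactor : (1 - q ^ (i - k)) * (1 - u * q ^ (i + k)) ≠ 0 :=
      mul_ne_zero (sub_ne_zero.2 (hq _ (sub_ne_zero.2 hik.ne')).symm) (sub_ne_zero.2 (hu _).symm)
    have hsum := mul_sum_bressoudA_mul_bressoudA hq0 hu0 hv0 hq hu hv hik.le le_rfl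
    rw [bressoudPartialSum_right] at hsum
    rw [if_neg hik.ne', (mul_eq_zero.1 hsum).resolve_left hfactor]
end

section
/- Define f_{ij} = (u/v)^{i-j} · ((v/u;q)_{i-j}/(q;q)_{i-j}) · ((v q^{2j};q)_{i-j}/(u q^{2j+1};q)_{i-j}) · (1-v q^{2i})/(1-v q^{2j}) and g_{kl} = ((u/v;q)_{k-l}/(q;q)_{k-l}) · ((v q^{k+l+1};q)_{k-l}/(u q^{k+l};q)_{k-l}). Then the lower-triangular matrices (f_{ij}) and (g_{kl}) are mutually inverse: ∑_{j with i ≥ j ≥ k} f_{ij} g_{jk} = δ_{ik}. -/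
open Finset

/-- The q-Pochhammer symbol `(x;q)_k = ∏_{j=0}^{k-1} (1 - x q^j)`. -/
def qPoch {F : Type*} [Field F] (x q : F) (k : ℕ) : F :=
  ∏ j ∈ Finset.range k, (1 - x * q ^ j)

/-- `f_{ij} = (u/v)^{i-j} ((v/u;q)_{i-j}/(q;q)_{i-j})
  ((vq^{2j};q)_{i-j}/(uq^{2j+1};q)_{i-j}) (1-vq^{2i})/(1-vq^{2j})`. -/
noncomputable def fMat {F : Type*} [Field F] (q u v : F) (i j : ℤ) : F :=
  (u / v) ^ (i - j) *
    (qPoch (v / u) q (i - j).toNat / qPoch q q (i - j).toNat) *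
    (qPoch (v * q ^ (2 * j)) q (i - j).toNat / qPoch (u * q ^ (2 * j + 1)) q (i - j).toNat) *
    ((1 - v * q ^ (2 * i)) / (1 - v * q ^ (2 * j)))

/-- `g_{kl} = ((u/v;q)_{k-l}/(q;q)_{k-l}) ((vq^{k+l+1};q)_{k-l}/(uq^{k+l};q)_{k-l})`. -/
noncomputable def gMat {F : Type*} [Field F] (q u v : F) (k l : ℤ) : F :=
  (qPoch (u / v) q (k - l).toNat / qPoch q q (k - l).toNat) *
    (qPoch (v * q ^ (k + l + 1)) q (k - l).toNat / qPoch (u * q ^ (k + l)) q (k - l).toNat)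

/-!
Replacing `u, v` by `u q ^ (2 k), v q ^ (2 k)` reduces the claim to the column `k = 0`. There the
summands `f_{nm} g_{m0}` are, up to a factor independent of `m`, those of a terminating
very-well-poised `₆φ₅` series with `a = u`, `b = u / v`, `c = v q ^ n`, `d = q ^ (-n)`. Since
`a = b c d`, every partial sum of that series is a product, and the full sum contains the factor
`(q ^ (1 - n); q)_n`, which vanishes for `n > 0`. The series is used with its denominators cleared,
because `(a q / c; q)_n = (u q ^ (1 - n) / v; q)_n` may vanish.
-/

lemma choose_two_add (m n : ℕ) :
    (m + n).choose 2 = m.choose 2 + n.choose 2 + m * n := by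
  simp only [Nat.add_choose_eq, Nat.sum_antidiagonal_succ, Nat.antidiagonal_zero, sum_singleton,
    zero_add, Nat.reduceAdd, Nat.choose_zero_right, Nat.choose_one_right]
  ring

section

variable {F : Type*} [Field F]

lemma qPoch_zero (x q : F) : qPoch x q 0 = 1 := prod_range_zero _

lemma qPoch_succ (x q : F) (n : ℕ) : qPoch x q (n + 1) = qPoch x q n * (1 - x * q ^ n) :=
  prod_range_succ _ n

lemma qPoch_add (x q : F) (m n : ℕ) :
    qPoch x q (m + n) = qPoch x q m * qPoch (x * q ^ m) q n := by
  simp only [qPoch, prod_range_add, pow_add, mul_assoc]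

lemma qPoch_succ' (x q : F) (n : ℕ) : qPoch x q (n + 1) = (1 - x) * qPoch (x * q) q n := by
  simpa [qPoch, add_comm 1 n] using qPoch_add x q 1 n

lemma qPoch_ne_zero {x q : F} (h : ∀ j : ℕ, x * q ^ j ≠ 1) (n : ℕ) : qPoch x q n ≠ 0 :=
  prod_ne_zero_iff.2 fun j _ ↦ sub_ne_zero.2 (h j).symm

lemma qPoch_mul_pow_ne_zero {x q : F} (h : ∀ j : ℕ, x * q ^ j ≠ 1) (m n : ℕ) :
    qPoch (x * q ^ m) q n ≠ 0 :=
  qPoch_ne_zero (fun j ↦ by simpa only [pow_add, mul_assoc] using h (m + j)) n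

lemma qPoch_eq_zero {x q : F} {j n : ℕ} (hj : j < n) (h : x * q ^ j = 1) : qPoch x q n = 0 :=
  prod_eq_zero (mem_range.2 hj) (sub_eq_zero.2 h.symm)

lemma qPoch_reflect {x q : F} (hx : x ≠ 0) (hq : q ≠ 0) (n : ℕ) :
    qPoch x q n = (-x) ^ n * q ^ n.choose 2 * qPoch ((x * q ^ n)⁻¹ * q) q n := by
  induction n with
  | zero => simp [qPoch_zero]
  | succ n ih =>
    have shift : (x * q ^ (n + 1))⁻¹ * q = (x * q ^ n)⁻¹ := by
      rw [pow_succ, ← mul_assoc, mul_inv, inv_mul_cancel_right₀ hq]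
    have factor : 1 - x * q ^ n = -x * q ^ n * (1 - (x * q ^ n)⁻¹) := by
      field_simp
      ring
    rw [qPoch_succ, ih, shift, qPoch_succ', factor, Nat.choose_succ_succ' n 1, Nat.choose_one_right]
    ring

/-- The `m`-th summand of the very-well-poised `₆φ₅` series with parameters `a; b, c, d`,
where `a = b * c * d`, truncated at `N = m + r`. It is multiplied by
`(1 - a) (q, a q / b, a q / c, a q / d; q)_N` to make it polynomial in the parameters. -/
def wellPoisedTerm (q b c d : F) (m r : ℕ) : F :=
  q ^ m * (1 - b * c * d * q ^ (2 * m)) *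
    (qPoch (b * c * d) q m * qPoch b q m * qPoch c q m * qPoch d q m) *
    (qPoch (q ^ (m + 1)) q r * qPoch (c * d * q ^ (m + 1)) q r *
      qPoch (b * d * q ^ (m + 1)) q r * qPoch (b * c * q ^ (m + 1)) q r)

lemma wellPoisedTerm_succ_right (q b c d : F) (m r : ℕ) :
    wellPoisedTerm q b c d m (r + 1) = wellPoisedTerm q b c d m r *
      ((1 - q ^ (m + r + 1)) * (1 - c * d * q ^ (m + r + 1)) *
        (1 - b * d * q ^ (m + r + 1)) * (1 - b * c * q ^ (m + r + 1))) := by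
  simp only [wellPoisedTerm, qPoch_succ]
  ring

theorem sum_wellPoisedTerm (q b c d : F) (n : ℕ) :
    ∑ p ∈ antidiagonal n, wellPoisedTerm q b c d p.1 p.2 =
      qPoch (b * c * d) q (n + 1) *
        (qPoch (b * q) q n * qPoch (c * q) q n * qPoch (d * q) q n) := by
  induction n with
  | zero => simp [wellPoisedTerm, qPoch]
  | succ n ih =>
    have inner_sum : ∑ p ∈ antidiagonal n, wellPoisedTerm q b c d p.1 (p.2 + 1) =
        (∑ p ∈ antidiagonal n, wellPoisedTerm q b c d p.1 p.2) *
          ((1 - q ^ (n + 1)) * (1 - c * d * q ^ (n + 1)) *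
            (1 - b * d * q ^ (n + 1)) * (1 - b * c * q ^ (n + 1))) := by
      rw [sum_mul]
      refine sum_congr rfl fun p hp ↦ ?_
      rw [wellPoisedTerm_succ_right, mem_antidiagonal.1 hp]
    have last_term : wellPoisedTerm q b c d (n + 1) 0 =
        q ^ (n + 1) * (1 - b * c * d * q ^ (2 * (n + 1))) * qPoch (b * c * d) q (n + 1) *
          ((1 - b) * qPoch (b * q) q n) * ((1 - c) * qPoch (c * q) q n) *
          ((1 - d) * qPoch (d * q) q n) := by
      simp only [wellPoisedTerm, qPoch_zero, qPoch_succ' b, qPoch_succ' c, qPoch_succ' d]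
      ring
    rw [Nat.sum_antidiagonal_succ', inner_sum, ih, last_term, qPoch_succ _ _ (n + 1),
      qPoch_succ (b * q), qPoch_succ (c * q), qPoch_succ (d * q)]
    ring

theorem sum_wellPoisedTerm_eq_zero {q : F} (hq : q ≠ 0) (b c : F) {n : ℕ} (hn : n ≠ 0) :
    ∑ p ∈ antidiagonal n, wellPoisedTerm q b c (q ^ n)⁻¹ p.1 p.2 = 0 := by
  obtain ⟨s, rfl⟩ := Nat.exists_eq_succ_of_ne_zero hn
  have terminates : qPoch ((q ^ (s + 1))⁻¹ * q) q (s + 1) = 0 :=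
    qPoch_eq_zero s.lt_succ_self (by
      rw [mul_assoc, ← pow_succ', inv_mul_cancel₀ (pow_ne_zero _ hq)])
  rw [sum_wellPoisedTerm, terminates, mul_zero, mul_zero]

lemma qPoch_two_mul_add_add_one (x q : F) (m r : ℕ) :
    qPoch x q (2 * (m + r) + 1) =
      qPoch x q m * qPoch (x * q ^ m) q m * (1 - x * q ^ (2 * m)) *
        qPoch (x * q ^ (2 * m + 1)) q r * qPoch (x * q ^ (2 * m + r + 1)) q r := by
  rw [show 2 * (m + r) + 1 = m + (m + ((r + r) + 1)) by ring, qPoch_add x, qPoch_add (x * q ^ m),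
    qPoch_succ', qPoch_add _ q r r]
  ring_nf

lemma qPoch_mul_qPoch_comm {x : F} (hx : x ≠ 1) (q : F) (m r : ℕ) :
    qPoch (x * q) q m * qPoch (x * q ^ m) q r * (1 - x * q ^ r) =
      qPoch (x * q) q r * qPoch (x * q ^ r) q m * (1 - x * q ^ m) := by
  have symmetric_form (m r : ℕ) :
      (1 - x) * (qPoch (x * q) q m * qPoch (x * q ^ m) q r * (1 - x * q ^ r)) =
        qPoch x q (m + r) * ((1 - x * q ^ m) * (1 - x * q ^ r)) := by
    have shift : (1 - x) * qPoch (x * q) q m = qPoch x q m * (1 - x * q ^ m) := by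
      rw [← qPoch_succ', qPoch_succ]
    rw [qPoch_add]
    linear_combination qPoch (x * q ^ m) q r * (1 - x * q ^ r) * shift
  apply mul_left_cancel₀ (sub_ne_zero.2 hx.symm)
  rw [symmetric_form m r, symmetric_form r m, add_comm r m, mul_comm (1 - x * q ^ r)]

lemma qPoch_self_add_sq (q : F) (m r : ℕ) :
    qPoch q q (m + r) ^ 2 =
      qPoch (q ^ (m + 1)) q r * qPoch (q ^ (r + 1)) q m * (qPoch q q r * qPoch q q m) := by
  have split (m r : ℕ) : qPoch q q (m + r) = qPoch q q m * qPoch (q ^ (m + 1)) q r := by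
    rw [qPoch_add, ← pow_succ']
  rw [sq]
  nth_rewrite 2 [add_comm m r]
  rw [split m r, split r m]
  ring

lemma qPoch_div_qPoch_mul_qPoch_reflect {q x : F} (hq : q ≠ 0) (hx : x ≠ 0)
    (hq' : ∀ j : ℕ, q * q ^ j ≠ 1) (m r : ℕ) :
    x⁻¹ ^ r * qPoch x q r / (qPoch q q r * qPoch q q m) =
      (-1) ^ (m + r) * q ^ (m + r).choose 2 / qPoch q q (m + r) ^ 2 *
        (q ^ m * qPoch (q ^ (m + r))⁻¹ q m * qPoch (q ^ (m + 1)) q r *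
          qPoch (x⁻¹ * (q ^ (m + r))⁻¹ * q ^ (m + 1)) q r) := by
  have reflect_x : qPoch x q r =
      (-x) ^ r * q ^ r.choose 2 * qPoch (x⁻¹ * (q ^ (m + r))⁻¹ * q ^ (m + 1)) q r := by
    rw [qPoch_reflect hx hq]
    congr 2
    field_simp
    ring
  have reflect_q : qPoch (q ^ (r + 1)) q m =
      (-q ^ (r + 1)) ^ m * q ^ m.choose 2 * qPoch (q ^ (m + r))⁻¹ q m := by
    rw [qPoch_reflect (pow_ne_zero _ hq) hq]
    congr 2
    field_simp
    ring
  have hm : qPoch q q m ≠ 0 := qPoch_ne_zero hq' m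
  have hr : qPoch q q r ≠ 0 := qPoch_ne_zero hq' r
  have hsum : qPoch q q (m + r) ≠ 0 := qPoch_ne_zero hq' (m + r)
  have powers : x⁻¹ ^ r * (-x) ^ r * q ^ r.choose 2 * ((-q ^ (r + 1)) ^ m * q ^ m.choose 2) =
      (-1) ^ (m + r) * q ^ (m + r).choose 2 * q ^ m := by
    rw [← mul_pow, mul_neg, inv_mul_cancel₀ hx, neg_pow (q ^ (r + 1)), choose_two_add]
    ring
  rw [reflect_x, div_mul_eq_mul_div, div_eq_div_iff (mul_ne_zero hr hm) (pow_ne_zero 2 hsum),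
    qPoch_self_add_sq, reflect_q]
  linear_combination qPoch (x⁻¹ * (q ^ (m + r))⁻¹ * q ^ (m + 1)) q r * qPoch (q ^ (m + 1)) q r *
    qPoch (q ^ (m + r))⁻¹ q m * (qPoch q q r * qPoch q q m) * powers

lemma fMat_mul_gMat_zero_eq_mul (q u v : F) (m r : ℕ) :
    fMat q u v (m + r : ℕ) m * gMat q u v m 0 =
      (u / v) ^ r * qPoch (v / u) q r / (qPoch q q r * qPoch q q m) *
        (qPoch (v * q ^ (m + 1)) q m * qPoch (v * q ^ (2 * m)) q r / (1 - v * q ^ (2 * m))) *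
        (1 / (qPoch (u * q ^ m) q m * qPoch (u * q ^ (2 * m + 1)) q r)) *
        (qPoch (u / v) q m * (1 - v * q ^ (2 * (m + r)))) := by
  have index : ((m + r : ℕ) : ℤ) - m = r := by push_cast; ring
  simp only [fMat, gMat, index, sub_zero, add_zero, Int.toNat_natCast]
  norm_cast
  simp only [div_eq_mul_inv, mul_inv]
  ring

lemma fMat_mul_gMat_zero {q u v : F} (hq : q ≠ 0) (hu : u ≠ 0) (hv : v ≠ 0)
    (hq' : ∀ j : ℕ, q * q ^ j ≠ 1) (hu' : ∀ j : ℕ, u * q ^ j ≠ 1) (hv' : ∀ j : ℕ, v * q ^ j ≠ 1)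
    {m r n : ℕ} (h : m + r = n) :
    fMat q u v n m * gMat q u v m 0 =
      (-1) ^ n * q ^ n.choose 2 * (1 - v * q ^ (2 * n)) /
          (qPoch q q n ^ 2 * qPoch u q (2 * n + 1) * (1 - v * q ^ n)) *
        wellPoisedTerm q (u / v) (v * q ^ n) (q ^ n)⁻¹ m r := by
  subst h
  have bcd : u / v * (v * q ^ (m + r)) * (q ^ (m + r))⁻¹ = u := by field_simp
  have cd : v * q ^ (m + r) * (q ^ (m + r))⁻¹ = v := by field_simp
  have bc : u / v * (v * q ^ (m + r)) = u * q ^ (m + r) := by field_simp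
  have bc_shift : u * q ^ (m + r) * q ^ (m + 1) = u * q ^ (2 * m + r + 1) := by ring
  have q_part := qPoch_div_qPoch_mul_qPoch_reflect hq (div_ne_zero hv hu) hq' m r
  rw [inv_div] at q_part
  have v_part : qPoch (v * q ^ (m + 1)) q m * qPoch (v * q ^ (2 * m)) q r / (1 - v * q ^ (2 * m)) =
      qPoch (v * q ^ (m + r)) q m * qPoch (v * q ^ (m + 1)) q r / (1 - v * q ^ (m + r)) := by
    rw [div_eq_div_iff (sub_ne_zero.2 (hv' _).symm) (sub_ne_zero.2 (hv' _).symm),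
      pow_succ, two_mul, pow_add, pow_add]
    simpa only [mul_assoc, mul_comm, mul_left_comm] using qPoch_mul_qPoch_comm (hv' m) q m r
  have u_part : 1 / (qPoch (u * q ^ m) q m * qPoch (u * q ^ (2 * m + 1)) q r) =
      (1 - u * q ^ (2 * m)) * qPoch u q m * qPoch (u * q ^ (2 * m + r + 1)) q r /
        qPoch u q (2 * (m + r) + 1) := by
    have total := qPoch_two_mul_add_add_one u q m r
    have total_ne : qPoch u q (2 * (m + r) + 1) ≠ 0 := qPoch_ne_zero hu' _
    have factors_ne := mul_ne_zero (qPoch_mul_pow_ne_zero hu' m m)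
      (qPoch_mul_pow_ne_zero hu' (2 * m + 1) r)
    rw [div_eq_div_iff factors_ne total_ne, total]
    ring
  rw [fMat_mul_gMat_zero_eq_mul, q_part, v_part, u_part, wellPoisedTerm, bcd, cd, bc, bc_shift]
  simp only [div_eq_mul_inv, mul_inv]
  ring

theorem sum_fMat_mul_gMat_zero {q u v : F} (hq : q ≠ 0) (hu : u ≠ 0) (hv : v ≠ 0)
    (hq' : ∀ j : ℕ, q * q ^ j ≠ 1) (hu' : ∀ j : ℕ, u * q ^ j ≠ 1) (hv' : ∀ j : ℕ, v * q ^ j ≠ 1)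
    {n : ℕ} (hn : n ≠ 0) :
    ∑ p ∈ antidiagonal n, fMat q u v n p.1 * gMat q u v p.1 0 = 0 := by
  rw [sum_congr rfl fun p hp ↦
      fMat_mul_gMat_zero hq hu hv hq' hu' hv' (mem_antidiagonal.1 hp),
    ← mul_sum, sum_wellPoisedTerm_eq_zero hq _ _ hn, mul_zero]

lemma fMat_add_add {q : F} (hq : q ≠ 0) (u v : F) (k i j : ℤ) :
    fMat q u v (k + i) (k + j) = fMat q (u * q ^ (2 * k)) (v * q ^ (2 * k)) i j := by
  have hk : q ^ (2 * k) ≠ 0 := zpow_ne_zero _ hq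
  simp only [fMat, add_sub_add_left_eq_sub, mul_add, add_assoc, zpow_add₀ hq (2 * k), ← mul_assoc,
    mul_div_mul_right _ _ hk]

lemma gMat_add_add {q : F} (hq : q ≠ 0) (u v : F) (k i j : ℤ) :
    gMat q u v (k + i) (k + j) = gMat q (u * q ^ (2 * k)) (v * q ^ (2 * k)) i j := by
  have hk : q ^ (2 * k) ≠ 0 := zpow_ne_zero _ hq
  have exponent : k + i + (k + j) = 2 * k + (i + j) := by ring
  simp only [gMat, add_sub_add_left_eq_sub, exponent, add_assoc (2 * k), zpow_add₀ hq (2 * k),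
    ← mul_assoc, mul_div_mul_right _ _ hk]

lemma fMat_self_mul_gMat_self {q v : F} (u : F) {k : ℤ} (hv : v * q ^ (2 * k) ≠ 1) :
    fMat q u v k k * gMat q u v k k = 1 := by
  have hv' : 1 - v * q ^ (2 * k) ≠ 0 := sub_ne_zero.2 hv.symm
  simp [fMat, gMat, qPoch_zero, div_self hv']

end

lemma sum_Icc_int_eq_sum_antidiagonal {M : Type*} [AddCommMonoid M] (f : ℤ → M) (k : ℤ) (n : ℕ) :
    ∑ j ∈ Icc k (k + n), f j = ∑ p ∈ antidiagonal n, f (k + p.1) := by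
  rw [Nat.sum_antidiagonal_eq_sum_range_succ_mk, Int.Icc_eq_finset_map, sum_map]
  simp [add_assoc]

/-- The lower-triangular matrices `(f_{ij})` and `(g_{kl})` are mutually inverse:
`∑_{i ≥ j ≥ k} f_{ij} g_{jk} = δ_{ik}`. -/
theorem stmt2 {F : Type*} [Field F] (q u v : F)
    (hq0 : q ≠ 0) (hu0 : u ≠ 0) (hv0 : v ≠ 0)
    (hq : ∀ m : ℤ, m ≠ 0 → q ^ m ≠ 1)
    (hu : ∀ m : ℤ, u * q ^ m ≠ 1)
    (hv : ∀ m : ℤ, v * q ^ m ≠ 1)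
    (i k : ℤ) :
    ∑ j ∈ Finset.Icc k i, fMat q u v i j * gMat q u v j k
      = if i = k then 1 else 0 := by
  rcases lt_trichotomy i k with hik | rfl | hki
  · rw [Icc_eq_empty hik.not_ge, sum_empty, if_neg hik.ne]
  · rw [Icc_self, sum_singleton, fMat_self_mul_gMat_self u (hv _), if_pos rfl]
  · obtain ⟨n, rfl⟩ := Int.le.dest hki.le
    have hk : q ^ (2 * k) ≠ 0 := zpow_ne_zero _ hq0
    have hq' (j : ℕ) : q * q ^ j ≠ 1 := by
      simpa only [zpow_natCast, pow_succ'] using hq (j + 1 : ℕ) (by omega)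
    have shift {x : F} (hx : ∀ m : ℤ, x * q ^ m ≠ 1) (j : ℕ) : x * q ^ (2 * k) * q ^ j ≠ 1 := by
      simpa only [zpow_add₀ hq0, zpow_natCast, mul_assoc] using hx (2 * k + j)
    have gMat_add (m : ℤ) :
        gMat q u v (k + m) k = gMat q (u * q ^ (2 * k)) (v * q ^ (2 * k)) m 0 := by
      simpa only [add_zero] using gMat_add_add hq0 u v k m 0
    rw [sum_Icc_int_eq_sum_antidiagonal, if_neg hki.ne']
    simp only [fMat_add_add hq0, gMat_add]
    exact sum_fMat_mul_gMat_zero hq0 (mul_ne_zero hu0 hk) (mul_ne_zero hv0 hk) hq'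
      (shift hu) (shift hv) (by omega)
end

section
/- Let x_1,…,x_n, u_1,…,u_r, t be indeterminates with r and n nonnegative integers. For f a rational function in the x_i, let T_i f denote the substitution x_i → 1/x_i, and T = (1+T_1)⋯(1+T_n). Let Φ = ∏_{i=1}^n (1-t x_i^2)/(1-x_i^2) · ∏_{1≤i<j≤n} (1-t x_i x_j)/(1-x_i x_j), and R(u) = ∏_{i=1}^n ((1-t u x_i)/(1-u x_i)) · ((1-t u/x_i)/(1-u/x_i)). Then T( Φ · ∏_{k=1}^r ∏_{i=1}^n (1-t u_k/x_i)/(1-u_k/x_i) ) = (-t;t)_{n-r} · ∑_{I ⊆ {1,…,r}} c_I ∏_{i∈I} R(u_i), where c_I = t^{n(r-|I|)} ∏_{1≤i<j≤r} (1-v_i v_j)/(1-t v_i v_j), with v_i = u_i if i∈I and v_i = 1/(t u_i) if i∉I, and where (-t;t)_{n-r} means ∏_{k=1}^{n-r}(t^k+1) if n ≥ r and ∏_{k=0}^{r-n-1}(t^{-k}+1)^{-1} if n < r. -/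
open Finset

/-- `x_i^{σ_i}`: the variable `x i` raised to the sign `σ i` (`true` = `+1`). -/
def sgnVar {F : Type*} [Field F] {n : ℕ} (x : Fin n → F) (σ : Fin n → Bool) (i : Fin n) : F :=
  if σ i then x i else (x i)⁻¹

/-- `Φ = ∏_i (1-tx_i²)/(1-x_i²) ∏_{i<j} (1-tx_ix_j)/(1-x_ix_j)`. -/
def PhiC {F : Type*} [Field F] {n : ℕ} (t : F) (x : Fin n → F) : F :=
  (∏ i, (1 - t * x i ^ 2) / (1 - x i ^ 2)) *
    ∏ i, ∏ j ∈ Finset.Ioi i, (1 - t * x i * x j) / (1 - x i * x j)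

/-- `R(u) = ∏_i ((1-tux_i)/(1-ux_i)) ((1-tu/x_i)/(1-u/x_i))`. -/
def RC {F : Type*} [Field F] {n : ℕ} (t : F) (x : Fin n → F) (u : F) : F :=
  ∏ i, ((1 - t * u * x i) / (1 - u * x i)) * ((1 - t * u / x i) / (1 - u / x i))

/-! Insert an auxiliary variable `z`: multiply the summand of each sign vector, with signed
variables `y_i`, by `∏ i, (1 - z y_i) (1 - t z / y_i)`, and the whole left-hand side by
`∏ k, (1 - z / u_k) (1 - t z u_k)`. With a suitable right-hand side this becomes an identity
between two polynomials in `z` of degree at most `2 (n + r)`, both reciprocal under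
`z ↦ 1 / (t z)`, so it is enough to check it at `n + r + 1` values of `z`, no two of which are
exchanged by this involution.

At `z = x_a` or `z = 1 / x_a`, half of the sign vectors drop out, and what remains is the identity
without the variable `x_a`. At `z = u_k`, both sides vanish. Together with `z = 1 / x_a` this is
enough to conclude, and `z = 0` returns the original identity. When there are no `x_i`, the value
`z = 0` is known instead, and evaluating at a new value `z = u_b` adjoins the variable `u_b`.

The argument needs the values of `z` to be generic. This is arranged by moving `t` slightly: the
field of Laurent series over the given field carries a topology without isolated points, in which
both sides are continuous in `t`. -/

section ReciprocalPairs

variable {F : Type*} [Field F] {t : F}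

/-- Polynomial functions of degree at most `d`. -/
def IsPolynomialOfDegreeLE (d : ℕ) (f : F → F) : Prop :=
  ∃ p : Polynomial F, p.natDegree ≤ d ∧ ∀ z, p.eval z = f z

namespace IsPolynomialOfDegreeLE

variable {d e : ℕ} {f g : F → F}

theorem const (c : F) : IsPolynomialOfDegreeLE d fun _ => c :=
  ⟨.C c, by simp, fun _ => Polynomial.eval_C⟩

open Polynomial in
theorem quadratic (a b c : F) : IsPolynomialOfDegreeLE 2 fun z => a + b * z + c * z ^ 2 :=
  ⟨C c * X ^ 2 + C b * X + C a, natDegree_quadratic_le, fun z => by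
    simp only [eval_add, eval_mul, eval_C, eval_pow, eval_X]
    ring⟩

theorem add (hf : IsPolynomialOfDegreeLE d f) (hg : IsPolynomialOfDegreeLE d g) :
    IsPolynomialOfDegreeLE d fun z => f z + g z := by
  obtain ⟨p, hp, hpf⟩ := hf
  obtain ⟨q, hq, hqg⟩ := hg
  exact ⟨p + q, Polynomial.natDegree_add_le_of_degree_le hp hq, fun z => by
    rw [Polynomial.eval_add, hpf, hqg]⟩

theorem mul (hf : IsPolynomialOfDegreeLE d f) (hg : IsPolynomialOfDegreeLE e g) :
    IsPolynomialOfDegreeLE (d + e) fun z => f z * g z := by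
  obtain ⟨p, hp, hpf⟩ := hf
  obtain ⟨q, hq, hqg⟩ := hg
  exact ⟨p * q, Polynomial.natDegree_mul_le_of_le hp hq, fun z => by
    rw [Polynomial.eval_mul, hpf, hqg]⟩

end IsPolynomialOfDegreeLE

/-- Two polynomial functions of degree at most `2 * N` exchanged by the involution
`z ↦ 1 / (t z)`, after normalization by `(t z²) ^ N`. A function paired with itself is
determined by about half as many values as its degree suggests. -/
structure IsReciprocalPair (t : F) (N : ℕ) (f g : F → F) : Prop where
  left_polynomial : IsPolynomialOfDegreeLE (2 * N) f
  right_polynomial : IsPolynomialOfDegreeLE (2 * N) g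
  reflect : ∀ z, z ≠ 0 → (t * z ^ 2) ^ N * f (t * z)⁻¹ = g z

namespace IsReciprocalPair

variable {α : Type*} {N M : ℕ} {f g f₁ g₁ f₂ g₂ : F → F}

theorem symm (ht : t ≠ 0) (h : IsReciprocalPair t N f g) : IsReciprocalPair t N g f where
  left_polynomial := h.right_polynomial
  right_polynomial := h.left_polynomial
  reflect z hz := by
    have hw : (t * z)⁻¹ ≠ 0 := inv_ne_zero (mul_ne_zero ht hz)
    have harg : (t * (t * z)⁻¹)⁻¹ = z := by field_simp
    have hscale : t * z ^ 2 * (t * (t * z)⁻¹ ^ 2) = 1 := by field_simp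
    rw [← h.reflect _ hw, harg, ← mul_assoc, ← mul_pow, hscale, one_pow, one_mul]

theorem add (h₁ : IsReciprocalPair t N f₁ g₁) (h₂ : IsReciprocalPair t N f₂ g₂) :
    IsReciprocalPair t N (fun z => f₁ z + f₂ z) (fun z => g₁ z + g₂ z) where
  left_polynomial := h₁.left_polynomial.add h₂.left_polynomial
  right_polynomial := h₁.right_polynomial.add h₂.right_polynomial
  reflect z hz := by rw [mul_add, h₁.reflect z hz, h₂.reflect z hz]

theorem mul (h₁ : IsReciprocalPair t N f₁ g₁) (h₂ : IsReciprocalPair t M f₂ g₂) :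
    IsReciprocalPair t (N + M) (fun z => f₁ z * f₂ z) (fun z => g₁ z * g₂ z) where
  left_polynomial := by
    rw [mul_add]; exact h₁.left_polynomial.mul h₂.left_polynomial
  right_polynomial := by
    rw [mul_add]; exact h₁.right_polynomial.mul h₂.right_polynomial
  reflect z hz := by rw [← h₁.reflect z hz, ← h₂.reflect z hz, pow_add, mul_mul_mul_comm]

theorem const (t c : F) : IsReciprocalPair t 0 (fun _ => c) (fun _ => c) :=
  ⟨.const c, .const c, fun z _ => by rw [pow_zero, one_mul]⟩

theorem const_mul (c : F) (h : IsReciprocalPair t N f g) :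
    IsReciprocalPair t N (fun z => c * f z) (fun z => c * g z) := by
  simpa only [zero_add] using (const t c).mul h

theorem quadratic (ht : t ≠ 0) (a b c : F) :
    IsReciprocalPair t 1 (fun z => a + b * z + c * z ^ 2)
      (fun z => c / t + b * z + t * a * z ^ 2) where
  left_polynomial := .quadratic a b c
  right_polynomial := .quadratic (c / t) b (t * a)
  reflect z hz := by field_simp; ring

theorem sum {s : Finset α} {f g : α → F → F} (h : ∀ i ∈ s, IsReciprocalPair t N (f i) (g i)) :
    IsReciprocalPair t N (fun z => ∑ i ∈ s, f i z) (fun z => ∑ i ∈ s, g i z) := by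
  classical
  induction s using Finset.induction_on with
  | empty =>
    simp only [sum_empty]
    exact ⟨.const 0, .const 0, fun z _ => mul_zero _⟩
  | insert a s ha ih =>
    simp only [Finset.sum_insert ha]
    exact (h a (mem_insert_self a s)).add (ih fun i hi => h i (mem_insert_of_mem hi))

theorem prod {s : Finset α} {f g : α → F → F} (h : ∀ i ∈ s, IsReciprocalPair t 1 (f i) (g i)) :
    IsReciprocalPair t #s (fun z => ∏ i ∈ s, f i z) (fun z => ∏ i ∈ s, g i z) := by
  classical
  induction s using Finset.induction_on with
  | empty => simpa using const t 1
  | insert a s ha ih =>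
    simp only [Finset.prod_insert ha, card_insert_of_notMem ha, add_comm #s]
    exact (h a (mem_insert_self a s)).mul (ih fun i hi => h i (mem_insert_of_mem hi))

/-- Besides the points of `A`, the difference `f - g` vanishes at their images under the
involution `z ↦ 1 / (t z)`. -/
theorem eq_of_eqOn (ht : t ≠ 0) (hf : IsReciprocalPair t N f f) (hg : IsReciprocalPair t N g g)
    {A : Finset F} (hA : ∀ z ∈ A, ∀ w ∈ A, t * z * w ≠ 1) (hcard : N < #A)
    (hfg : ∀ z ∈ A, f z = g z) : f = g := by
  classical
  obtain ⟨p, hp, hpf⟩ := hf.left_polynomial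
  obtain ⟨q, hq, hqg⟩ := hg.left_polynomial
  let B : Finset F := (A.erase 0).image fun z => (t * z)⁻¹
  have hcardB : #B = #(A.erase 0) := card_image_of_injective _ fun z w hzw =>
    mul_left_cancel₀ ht (inv_injective hzw)
  have hdisj : Disjoint A B := by
    refine disjoint_left.2 fun z hz hzB => ?_
    obtain ⟨w, hw, rfl⟩ := mem_image.1 hzB
    obtain ⟨hw0, hwA⟩ := mem_erase.1 hw
    exact hA w hwA _ hz (mul_inv_cancel₀ (mul_ne_zero ht hw0))
  have hroots : ∀ z ∈ A ∪ B, (p - q).eval z = 0 := by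
    intro z hz
    rw [Polynomial.eval_sub, hpf, hqg, sub_eq_zero]
    rcases mem_union.1 hz with hz | hz
    · exact hfg z hz
    · obtain ⟨w, hw, rfl⟩ := mem_image.1 hz
      obtain ⟨hw0, hwA⟩ := mem_erase.1 hw
      have hscale : (t * w ^ 2) ^ N ≠ 0 := pow_ne_zero _ (mul_ne_zero ht (pow_ne_zero _ hw0))
      exact mul_left_cancel₀ hscale <| by rw [hf.reflect w hw0, hg.reflect w hw0, hfg w hwA]
  have hdeg : (p - q).natDegree < #(A ∪ B) := by
    have := Polynomial.natDegree_sub_le_of_le hp hq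
    have := pred_card_le_card_erase (s := A) (a := 0)
    rw [card_union_of_disjoint hdisj, hcardB]
    omega
  have hpq := Polynomial.eq_zero_of_natDegree_lt_card_of_eval_eq_zero' _ _ hroots hdeg
  funext z
  rw [← hpf, ← hqg, sub_eq_zero.1 hpq]

end IsReciprocalPair

end ReciprocalPairs

section PairProducts

variable {ι M : Type*} [LinearOrder ι] [CommMonoid M]

/-- The product of `f i j` over the pairs `i < j` of elements of `S`. -/
def pairProd (S : Finset ι) (f : ι → ι → M) : M :=
  ∏ i ∈ S, ∏ j ∈ S with i < j, f i j

theorem pairProd_univ_fin {n : ℕ} (f : Fin n → Fin n → M) :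
    pairProd univ f = ∏ i, ∏ j ∈ Ioi i, f i j := by
  simp only [pairProd, filter_lt_eq_Ioi]

theorem pairProd_congr {S : Finset ι} {f g : ι → ι → M}
    (h : ∀ i ∈ S, ∀ j ∈ S, f i j = g i j) : pairProd S f = pairProd S g :=
  prod_congr rfl fun i hi => prod_congr rfl fun j hj => h i hi j (mem_filter.1 hj).1

theorem map_pairProd {N : Type*} [CommMonoid N] (φ : M →* N) (S : Finset ι) (f : ι → ι → M) :
    φ (pairProd S f) = pairProd S fun i j => φ (f i j) := by
  simp only [pairProd, map_prod]

theorem pairProd_insert {S : Finset ι} {f : ι → ι → M} (hf : ∀ i j, f i j = f j i) {a : ι}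
    (ha : a ∉ S) : pairProd (insert a S) f = (∏ i ∈ S, f a i) * pairProd S f := by
  have hrow : ∀ i ∈ S, ∏ j ∈ insert a S with i < j, f i j =
      (if i < a then f a i else 1) * ∏ j ∈ S with i < j, f i j := by
    intro i _
    rw [filter_insert]
    split_ifs
    · rw [prod_insert fun h => ha (mem_filter.1 h).1, hf]
    · rw [one_mul]
  have hsplit : (∏ j ∈ S with a < j, f a j) * (∏ i ∈ S, if i < a then f a i else 1) =
      ∏ i ∈ S, f a i := by
    rw [prod_filter, ← prod_mul_distrib]
    refine prod_congr rfl fun i hi => ?_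
    rcases lt_or_gt_of_ne (ne_of_mem_of_not_mem hi ha) with h | h <;> simp [h, h.not_gt]
  rw [pairProd, prod_insert ha, prod_congr rfl hrow, prod_mul_distrib, filter_insert,
    if_neg (lt_irrefl a), ← mul_assoc, hsplit, pairProd]

end PairProducts

section FlippedVariables

variable {ι F : Type*} [DecidableEq ι] [Field F]

/-- The variables `x i` for `i ∈ I` together with `1 / (s * x i)` for `i ∉ I`. The sign changes
`x i ↦ x i⁻¹` are the case `s = 1`; the variables `v` entering `c_I` are the case `s = t`. -/
def flipVar (s : F) (x : ι → F) (I : Finset ι) (i : ι) : F :=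
  if i ∈ I then x i else (s * x i)⁻¹

variable {s : F} {x : ι → F} {I : Finset ι} {i a : ι}

theorem flipVar_of_mem (h : i ∈ I) : flipVar s x I i = x i := if_pos h

theorem flipVar_of_notMem (h : i ∉ I) : flipVar s x I i = (s * x i)⁻¹ := if_neg h

theorem flipVar_insert_of_ne (h : i ≠ a) : flipVar s x (insert a I) i = flipVar s x I i := by
  simp only [flipVar, mem_insert, h, false_or]

theorem flipVar_ne_zero (hs : s ≠ 0) (hx : x i ≠ 0) : flipVar s x I i ≠ 0 := by
  unfold flipVar
  split_ifs
  exacts [hx, inv_ne_zero (mul_ne_zero hs hx)]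

theorem flipVar_mul_ne_one_and_ne {z : F} (hs : s ≠ 0) (hx : x i ≠ 0)
    (h₁ : s * z * x i ≠ 1) (h₂ : z ≠ x i) :
    s * z * flipVar s x I i ≠ 1 ∧ z ≠ flipVar s x I i := by
  unfold flipVar
  split_ifs
  · exact ⟨h₁, h₂⟩
  · constructor
    · rwa [mul_inv, mul_mul_mul_comm, mul_inv_cancel₀ hs, one_mul, ← div_eq_mul_inv, ne_eq,
        div_eq_one_iff_eq hx]
    · rintro rfl
      exact h₁ (by field_simp)

theorem flipVar_mul_flipVar_ne_one {j : ι} (hs : s ≠ 0) (hi : x i ≠ 0) (hj : x j ≠ 0)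
    (h₁ : s * x i * x j ≠ 1) (h₂ : x i ≠ x j) :
    s * flipVar s x I i * flipVar s x I j ≠ 1 := by
  obtain ⟨h₃, h₄⟩ := flipVar_mul_ne_one_and_ne (I := I) hs hj h₁ h₂
  rw [mul_right_comm] at h₃ ⊢
  exact (flipVar_mul_ne_one_and_ne hs hi h₃ h₄.symm).1

theorem mul_flipVar_one_ne_one {w : F} (hw : w = x a ∨ w = (x a)⁻¹)
    (hxa : x a ≠ 0) (hxi : x i ≠ 0) (h₁ : x a * x i ≠ 1) (h₂ : x a ≠ x i) :
    w * flipVar 1 x I i ≠ 1 := by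
  obtain ⟨h₃, h₄⟩ := flipVar_mul_ne_one_and_ne (I := I) one_ne_zero hxi (by rwa [one_mul]) h₂
  rw [one_mul] at h₃
  rcases hw with rfl | rfl
  · exact h₃
  · rwa [ne_eq, inv_mul_eq_one₀ hxa]

end FlippedVariables

section Factors

variable {ι κ F : Type*} [Field F] {t z : F}

/-- The factor `(1 - t z) / (1 - z)`, of which all the products in the identity are composed. -/
def hlFactor (t z : F) : F := (1 - t * z) / (1 - z)

theorem hlFactor_mul_one_sub (hz : z ≠ 1) : hlFactor t z * (1 - z) = 1 - t * z :=
  div_mul_cancel₀ _ (sub_ne_zero.2 hz.symm)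

theorem map_hlFactor {K : Type*} [Field K] (f : F →+* K) (t z : F) :
    f (hlFactor t z) = hlFactor (f t) (f z) := by
  simp only [hlFactor, map_div₀, map_sub, map_one, map_mul]

/-- The polynomial `∏ i ∈ S, (1 - z x_i) (1 - z / x_i)` in `z`, which does not see the signs of
the exponents of the `x_i`. -/
def symProd (x : ι → F) (S : Finset ι) (z : F) : F :=
  ∏ i ∈ S, (1 - z * x i) * (1 - z / x i)

/-- The polynomial `∏ k ∈ U, (1 - z / u_k) (1 - t z u_k)` in `z`, which does not see the
substitutions `u_k ↦ 1 / (t u_k)`. -/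
def twistedSymProd (t : F) (u : κ → F) (U : Finset κ) (z : F) : F :=
  ∏ k ∈ U, (1 - z / u k) * (1 - t * z * u k)

theorem symProd_congr {x y : ι → F} {S : Finset ι} (h : ∀ i ∈ S, x i = y i) :
    symProd x S z = symProd y S z :=
  prod_congr rfl fun i hi => by rw [h i hi]

theorem symProd_insert [DecidableEq ι] {x : ι → F} {S : Finset ι} {a : ι} (ha : a ∉ S) :
    symProd x (insert a S) z = (1 - z * x a) * (1 - z / x a) * symProd x S z :=
  prod_insert ha

theorem symProd_insert_of_eq_or_eq_inv [DecidableEq ι] {x : ι → F} {S : Finset ι} {a : ι} {w : F}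
    (ha : a ∉ S) (hw : w = x a ∨ w = (x a)⁻¹) :
    symProd x (insert a S) z = (1 - z * w) * (1 - z / w) * symProd x S z := by
  rw [symProd_insert ha]
  rcases hw with rfl | rfl
  · rfl
  · rw [div_inv_eq_mul, ← div_eq_mul_inv, mul_comm (1 - z / x a)]

theorem symProd_flipVar_one [DecidableEq ι] (x : ι → F) (S J : Finset ι) (z : F) :
    symProd (flipVar 1 x J) S z = symProd x S z := by
  refine prod_congr rfl fun i _ => ?_
  unfold flipVar
  split_ifs
  · rfl
  · rw [one_mul, div_inv_eq_mul, ← div_eq_mul_inv, mul_comm]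

theorem symProd_ne_zero {x : ι → F} {S : Finset ι} (hx : ∀ i ∈ S, x i ≠ 0)
    (hz : ∀ i ∈ S, z * x i ≠ 1 ∧ z ≠ x i) : symProd x S z ≠ 0 :=
  prod_ne_zero_iff.2 fun i hi => mul_ne_zero (sub_ne_zero.2 (hz i hi).1.symm) <|
    sub_ne_zero.2 fun h => (hz i hi).2 <| ((div_eq_one_iff_eq (hx i hi)).1 h.symm)

theorem twistedSymProd_ne_zero {u : κ → F} {U : Finset κ} (hu : ∀ k ∈ U, u k ≠ 0)
    (hz : ∀ k ∈ U, t * z * u k ≠ 1 ∧ z ≠ u k) : twistedSymProd t u U z ≠ 0 :=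
  prod_ne_zero_iff.2 fun k hk => mul_ne_zero
    (sub_ne_zero.2 fun h => (hz k hk).2 <| ((div_eq_one_iff_eq (hu k hk)).1 h.symm))
    (sub_ne_zero.2 (hz k hk).1.symm)

theorem twistedSymProd_flipVar [DecidableEq κ] (ht : t ≠ 0) (u : κ → F) (U I : Finset κ) (z : F) :
    twistedSymProd t (flipVar t u I) U z = twistedSymProd t u U z := by
  refine prod_congr rfl fun k _ => ?_
  unfold flipVar
  split_ifs
  · rfl
  · rw [div_inv_eq_mul, mul_inv, mul_mul_mul_comm, mul_inv_cancel₀ ht, one_mul, ← div_eq_mul_inv,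
      mul_comm (1 - z * _), ← mul_assoc, mul_comm z t]

theorem twistedSymProd_zero (t : F) (u : κ → F) (U : Finset κ) : twistedSymProd t u U 0 = 1 := by
  simp [twistedSymProd]

theorem twistedSymProd_eq_zero {u : κ → F} {U : Finset κ} {k : κ} (hk : k ∈ U) (hu : u k ≠ 0) :
    twistedSymProd t u U (u k) = 0 :=
  prod_eq_zero hk <| by rw [div_self hu, sub_self, zero_mul]

theorem symProd_eq_twistedSymProd_mul {v : κ → F} {U : Finset κ}
    (h : ∀ k ∈ U, t * z * v k ≠ 1) :
    symProd v U z = twistedSymProd t v U z * ∏ k ∈ U, (hlFactor t (z * v k))⁻¹ := by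
  rw [symProd, twistedSymProd, ← prod_mul_distrib]
  refine prod_congr rfl fun k hk => ?_
  have := sub_ne_zero.2 (h k hk).symm
  rw [hlFactor, inv_div, ← mul_assoc t z, mul_assoc, mul_div_cancel₀ _ this, mul_comm]

theorem symProd_mul_eq_twistedSymProd_mul (ht : t ≠ 0) (hz : z ≠ 0) {v : κ → F} {U : Finset κ}
    (hv : ∀ k ∈ U, v k ≠ 0) (h : ∀ k ∈ U, z ≠ v k) :
    symProd v U (t * z) =
      t ^ #U * twistedSymProd t v U z * ∏ k ∈ U, (hlFactor t ((t * z)⁻¹ * v k))⁻¹ := by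
  rw [symProd, twistedSymProd, ← prod_const, ← prod_mul_distrib, ← prod_mul_distrib]
  refine prod_congr rfl fun k hk => ?_
  have hvk := hv k hk
  have := sub_ne_zero.2 (h k hk)
  have h₁ : 1 - t * ((t * z)⁻¹ * v k) = (z - v k) / z := by field_simp
  have h₂ : 1 - (t * z)⁻¹ * v k = (t * z - v k) / (t * z) := by field_simp
  rw [hlFactor, inv_div, h₁, h₂]
  field_simp
  ring

theorem isReciprocalPair_twistedSymProd (ht : t ≠ 0) {u : κ → F} {U : Finset κ}
    (hu : ∀ k ∈ U, u k ≠ 0) :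
    IsReciprocalPair t #U (twistedSymProd t u U) (twistedSymProd t u U) := by
  refine .prod fun k hk => ?_
  have huk := hu k hk
  convert IsReciprocalPair.quadratic ht 1 (-((u k)⁻¹ + t * u k)) t using 2 <;> field_simp <;> ring

theorem isReciprocalPair_symProd (ht : t ≠ 0) {x : ι → F} {S : Finset ι}
    (hx : ∀ i ∈ S, x i ≠ 0) :
    IsReciprocalPair t #S (fun z => symProd x S (t * z)) fun z => t ^ #S * symProd x S z := by
  simp only [symProd, ← prod_const, ← prod_mul_distrib]
  refine .prod fun i hi => ?_
  have hxi := hx i hi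
  convert IsReciprocalPair.quadratic ht 1 (-t * (x i + (x i)⁻¹)) (t ^ 2) using 2 <;>
    field_simp <;> ring

end Factors

section SignSums

variable {ι κ F : Type*} [LinearOrder ι] [Field F] {t w : F}

/-- The summand of the left-hand side at the values `y` of the signed variables. -/
def signTerm (t : F) (S : Finset ι) (u : κ → F) (U : Finset κ) (y : ι → F) : F :=
  (∏ i ∈ S, hlFactor t (y i ^ 2)) * pairProd S (fun i j => hlFactor t (y i * y j)) *
    ∏ k ∈ U, ∏ i ∈ S, hlFactor t (u k / y i)

/-- The left-hand side of the identity, for the variables `x i`, `i ∈ S`, and `u k`, `k ∈ U`. -/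
def signSum (t : F) (x : ι → F) (S : Finset ι) (u : κ → F) (U : Finset κ) : F :=
  ∑ J ∈ S.powerset, signTerm t S u U (flipVar 1 x J)

/-- The summand of the left-hand side, multiplied by a polynomial in `z` that kills it as soon as
`z` is the inverse of a signed variable. -/
def clearedSignTerm (t : F) (S : Finset ι) (u : κ → F) (U : Finset κ) (z : F) (y : ι → F) : F :=
  signTerm t S u U y * twistedSymProd t y⁻¹ S z

/-- The left-hand side of the identity with each summand multiplied by its polynomial in an
auxiliary variable `z`; the value at `z = 0` is the left-hand side itself. -/
def clearedSignSum (t : F) (x : ι → F) (S : Finset ι) (u : κ → F) (U : Finset κ) (z : F) : F :=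
  ∑ J ∈ S.powerset, clearedSignTerm t S u U z (flipVar 1 x J)

variable {S : Finset ι} {u : κ → F} {U : Finset κ} {a : ι}

theorem signTerm_congr {y y' : ι → F} (h : ∀ i ∈ S, y i = y' i) :
    signTerm t S u U y = signTerm t S u U y' := by
  unfold signTerm
  congr 1
  · congr 1
    · exact prod_congr rfl fun i hi => by rw [h i hi]
    · exact pairProd_congr fun i hi j hj => by rw [h i hi, h j hj]
  · exact prod_congr rfl fun k _ => prod_congr rfl fun i hi => by rw [h i hi]

theorem signTerm_insert (ha : a ∉ S) (y : ι → F) :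
    signTerm t (insert a S) u U y = (∏ i ∈ insert a S, hlFactor t (y a * y i)) *
      (∏ k ∈ U, hlFactor t (u k / y a)) * signTerm t S u U y := by
  have hpair := pairProd_insert (f := fun i j => hlFactor t (y i * y j))
    (fun i j => by rw [mul_comm (y i)]) ha
  simp only [signTerm, hpair, prod_insert ha, prod_mul_distrib, sq]
  ring

theorem clearedSignTerm_eq_zero (ha : a ∈ S) {y : ι → F} (hy : w * y a = 1) :
    clearedSignTerm t S u U w y = 0 := by
  have hroot : twistedSymProd t y⁻¹ S w = 0 :=
    prod_eq_zero ha (by rw [Pi.inv_apply, div_inv_eq_mul, hy, sub_self, zero_mul])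
  rw [clearedSignTerm, hroot, mul_zero]

theorem clearedSignTerm_insert_of_eq (ha : a ∉ S) {y : ι → F} (hy : y a = w)
    (hwy : ∀ i ∈ insert a S, w * y i ≠ 1) :
    clearedSignTerm t (insert a S) u U w y = symProd y (insert a S) (t * w) *
      (∏ k ∈ U, hlFactor t (u k / w)) * signTerm t S u U y := by
  have hcancel : (∏ i ∈ insert a S, hlFactor t (w * y i)) * twistedSymProd t y⁻¹ (insert a S) w =
      symProd y (insert a S) (t * w) := by
    rw [twistedSymProd, symProd, ← prod_mul_distrib]
    refine prod_congr rfl fun i hi => ?_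
    rw [Pi.inv_apply, div_inv_eq_mul, ← mul_assoc, hlFactor_mul_one_sub (hwy i hi),
      ← div_eq_mul_inv, mul_assoc t]
  rw [clearedSignTerm, signTerm_insert ha, hy, ← hcancel]
  ring

theorem signSum_empty (t : F) (x : ι → F) (u : κ → F) (U : Finset κ) :
    signSum t x ∅ u U = 1 := by
  simp [signSum, signTerm, pairProd]

theorem clearedSignSum_empty (t : F) (x : ι → F) (u : κ → F) (U : Finset κ) (z : F) :
    clearedSignSum t x ∅ u U z = 1 := by
  simp [clearedSignSum, clearedSignTerm, signTerm, pairProd, twistedSymProd]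

theorem clearedSignSum_zero (t : F) (x : ι → F) (S : Finset ι) (u : κ → F) (U : Finset κ) :
    clearedSignSum t x S u U 0 = signSum t x S u U := by
  simp only [clearedSignSum, clearedSignTerm, twistedSymProd_zero, mul_one, signSum]

theorem isReciprocalPair_clearedSignSum (ht : t ≠ 0) {x : ι → F} (hx : ∀ i ∈ S, x i ≠ 0) :
    IsReciprocalPair t #S (clearedSignSum t x S u U) (clearedSignSum t x S u U) :=
  .sum fun _ _ => .const_mul _ <| isReciprocalPair_twistedSymProd ht fun i hi =>
    inv_ne_zero (flipVar_ne_zero one_ne_zero (hx i hi))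

/-- Only the sign vectors that turn the variable `a` into `w` contribute. -/
theorem clearedSignSum_insert {x : ι → F} (ha : a ∉ S) (hw : w = x a ∨ w = (x a)⁻¹)
    (hxa : x a ≠ 0) (hxa2 : x a ^ 2 ≠ 1) (hx : ∀ i ∈ S, x i ≠ 0)
    (hxx : ∀ i ∈ S, x a * x i ≠ 1 ∧ x a ≠ x i) :
    clearedSignSum t x (insert a S) u U w = symProd x (insert a S) (t * w) *
      (∏ k ∈ U, hlFactor t (u k / w)) * signSum t x S u U := by
  have hww : w * w ≠ 1 := by
    rcases hw with rfl | rfl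
    · rwa [← sq]
    · rwa [← mul_inv, ne_eq, inv_eq_one, ← sq]
  have hterm : ∀ J ∈ S.powerset, ∀ y : ι → F, y a = w → (∀ i ∈ S, y i = flipVar 1 x J i) →
      (∀ z, symProd y (insert a S) z = symProd x (insert a S) z) →
      clearedSignTerm t (insert a S) u U w y = symProd x (insert a S) (t * w) *
        (∏ k ∈ U, hlFactor t (u k / w)) * signTerm t S u U (flipVar 1 x J) := by
    intro J _ y hya hy hsym
    rw [clearedSignTerm_insert_of_eq ha hya, hsym, signTerm_congr hy]
    simp only [forall_mem_insert, hya]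
    exact ⟨hww, fun i hi => hy i hi ▸
      mul_flipVar_one_ne_one hw hxa (hx i hi) (hxx i hi).1 (hxx i hi).2⟩
  rw [clearedSignSum, sum_powerset_insert ha, ← sum_add_distrib, signSum, mul_sum]
  refine sum_congr rfl fun J hJ => ?_
  have haJ : a ∉ J := fun h => ha (mem_powerset.1 hJ h)
  have hout : flipVar 1 x J a = (x a)⁻¹ := by rw [flipVar_of_notMem haJ, one_mul]
  have hin : flipVar 1 x (insert a J) a = x a := flipVar_of_mem (mem_insert_self a J)
  have hold : ∀ i ∈ S, flipVar 1 x (insert a J) i = flipVar 1 x J i := fun i hi =>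
    flipVar_insert_of_ne (ne_of_mem_of_not_mem hi ha)
  rcases hw with rfl | rfl
  · rw [clearedSignTerm_eq_zero (mem_insert_self a S) (by rw [hout, mul_inv_cancel₀ hxa]), zero_add,
      hterm J hJ _ hin hold (symProd_flipVar_one x _ _)]
  · rw [clearedSignTerm_eq_zero (y := flipVar 1 x (insert a J)) (mem_insert_self a S)
      (by rw [hin, inv_mul_cancel₀ hxa]), add_zero,
      hterm J hJ _ hout (fun _ _ => rfl) (symProd_flipVar_one x _ _)]

end SignSums

section SubsetSums

variable {ι κ F : Type*} [LinearOrder κ] [Field F] {t : F}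

/-- The contribution of the single variable `u k` to the summand of a subset `I`: the product
`R(u_k)` for `k ∈ I`, and `t ^ n` for `k ∉ I`. -/
def subsetFactor (t : F) (x : ι → F) (S : Finset ι) (u : κ → F) (I : Finset κ) (k : κ) : F :=
  if k ∈ I then symProd x S (t * u k) / symProd x S (u k) else t ^ #S

/-- The summand `c_I ∏ i ∈ I, R(u_i)` of the right-hand side. -/
def subsetTerm (t : F) (x : ι → F) (S : Finset ι) (u : κ → F) (U I : Finset κ) : F :=
  pairProd U (fun k l => (hlFactor t (flipVar t u I k * flipVar t u I l))⁻¹) *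
    ∏ k ∈ U, subsetFactor t x S u I k

/-- The right-hand side of the identity, up to the constant `(-t;t)_{n-r}`. -/
def weightedSubsetSum (t : F) (x : ι → F) (S : Finset ι) (u : κ → F) (U : Finset κ) : F :=
  ∑ I ∈ U.powerset, subsetTerm t x S u U I

/-- The right-hand side that goes with `clearedSignSum`. The second product in the brackets is the
image of the first one under `z ↦ 1 / (t z)`. -/
def clearedSubsetSum (t : F) (x : ι → F) (S : Finset ι) (u : κ → F) (U : Finset κ) (z : F) : F :=
  ∑ I ∈ U.powerset, subsetTerm t x S u U I *
    (t ^ #U * symProd (flipVar t u I) U z * symProd x S (t * z) +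
      symProd (flipVar t u I) U (t * z) * (t ^ #S * symProd x S z))

variable {x : ι → F} {S : Finset ι} {u : κ → F} {U I : Finset κ} {b : κ}

theorem clearedSubsetSum_zero (t : F) (x : ι → F) (S : Finset ι) (u : κ → F) (U : Finset κ) :
    clearedSubsetSum t x S u U 0 = (t ^ #U + t ^ #S) * weightedSubsetSum t x S u U := by
  rw [clearedSubsetSum, weightedSubsetSum, mul_sum]
  refine sum_congr rfl fun I _ => ?_
  simp only [symProd, mul_zero, zero_mul, zero_div, sub_zero, prod_const_one, mul_one, one_mul]
  ring

theorem isReciprocalPair_clearedSubsetSum (ht : t ≠ 0) (hx : ∀ i ∈ S, x i ≠ 0)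
    (hu : ∀ k ∈ U, u k ≠ 0) :
    IsReciprocalPair t (#S + #U) (clearedSubsetSum t x S u U) (clearedSubsetSum t x S u U) := by
  refine .sum fun I _ => .const_mul _ ?_
  have hU := (isReciprocalPair_symProd ht fun k hk =>
    flipVar_ne_zero (I := I) ht (hu k hk)).symm ht
  have hpair := hU.mul (isReciprocalPair_symProd ht hx)
  rw [add_comm #S]
  convert hpair.add (hpair.symm ht) using 2
  exact add_comm _ _

theorem subsetTerm_insert (hb : b ∉ U) :
    subsetTerm t x S u (insert b U) I =
      (∏ k ∈ U, (hlFactor t (flipVar t u I b * flipVar t u I k))⁻¹) *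
        subsetFactor t x S u I b * subsetTerm t x S u U I := by
  have hpair := pairProd_insert
    (f := fun k l => (hlFactor t (flipVar t u I k * flipVar t u I l))⁻¹)
    (fun k l => by rw [mul_comm (flipVar t u I k)]) hb
  rw [subsetTerm, hpair, prod_insert hb, subsetTerm]
  ring

theorem subsetTerm_insert_insert (hb : b ∉ U) :
    subsetTerm t x S u (insert b U) (insert b I) =
      (∏ k ∈ U, (hlFactor t (u b * flipVar t u I k))⁻¹) *
        (symProd x S (t * u b) / symProd x S (u b)) * subsetTerm t x S u U I := by
  have hv : ∀ k ∈ U, flipVar t u (insert b I) k = flipVar t u I k := fun k hk =>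
    flipVar_insert_of_ne (ne_of_mem_of_not_mem hk hb)
  have hfactor : ∀ k ∈ U, subsetFactor t x S u (insert b I) k = subsetFactor t x S u I k :=
    fun k hk => by simp only [subsetFactor, mem_insert, ne_of_mem_of_not_mem hk hb, false_or]
  have hterm : subsetTerm t x S u U (insert b I) = subsetTerm t x S u U I := by
    rw [subsetTerm, subsetTerm, prod_congr rfl hfactor]
    congr 1
    exact pairProd_congr fun k hk l hl => by rw [hv k hk, hv l hl]
  rw [subsetTerm_insert hb, hterm, flipVar_of_mem (mem_insert_self b I), subsetFactor,
    if_pos (mem_insert_self b I)]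
  congr 2
  exact prod_congr rfl fun k hk => by rw [hv k hk]

theorem subsetTerm_insert_of_notMem (hb : b ∉ U) (hbI : b ∉ I) :
    subsetTerm t x S u (insert b U) I =
      (∏ k ∈ U, (hlFactor t ((t * u b)⁻¹ * flipVar t u I k))⁻¹) * t ^ #S *
        subsetTerm t x S u U I := by
  rw [subsetTerm_insert hb, flipVar_of_notMem hbI, subsetFactor, if_neg hbI]

theorem symProd_flipVar_eq (ht : t ≠ 0) {z : F} (hu : ∀ k ∈ U, u k ≠ 0)
    (hz : ∀ k ∈ U, t * z * u k ≠ 1 ∧ z ≠ u k) :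
    symProd (flipVar t u I) U z =
      twistedSymProd t u U z * ∏ k ∈ U, (hlFactor t (z * flipVar t u I k))⁻¹ := by
  rw [symProd_eq_twistedSymProd_mul fun k hk =>
    (flipVar_mul_ne_one_and_ne ht (hu k hk) (hz k hk).1 (hz k hk).2).1, twistedSymProd_flipVar ht]

theorem symProd_flipVar_mul_eq (ht : t ≠ 0) {z : F} (hz0 : z ≠ 0) (hu : ∀ k ∈ U, u k ≠ 0)
    (hz : ∀ k ∈ U, t * z * u k ≠ 1 ∧ z ≠ u k) :
    symProd (flipVar t u I) U (t * z) = t ^ #U * twistedSymProd t u U z *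
      ∏ k ∈ U, (hlFactor t ((t * z)⁻¹ * flipVar t u I k))⁻¹ := by
  rw [symProd_mul_eq_twistedSymProd_mul ht hz0 (fun k hk => flipVar_ne_zero ht (hu k hk))
    fun k hk => (flipVar_mul_ne_one_and_ne ht (hu k hk) (hz k hk).1 (hz k hk).2).2,
    twistedSymProd_flipVar ht]

/-- Evaluating at a new value `u b` of `z` adjoins the variable `u b` to the right-hand side: the
two products in the brackets account for the subsets with and without `b`. -/
theorem clearedSubsetSum_of_notMem (ht : t ≠ 0) (hb : b ∉ U) (hub : u b ≠ 0)
    (hu : ∀ k ∈ U, u k ≠ 0) (huu : ∀ k ∈ U, t * u b * u k ≠ 1 ∧ u b ≠ u k)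
    (hS : symProd x S (u b) ≠ 0) :
    clearedSubsetSum t x S u U (u b) =
      t ^ #U * twistedSymProd t u U (u b) * symProd x S (u b) *
        weightedSubsetSum t x S u (insert b U) := by
  rw [clearedSubsetSum, weightedSubsetSum, sum_powerset_insert hb, ← sum_add_distrib, mul_sum]
  refine sum_congr rfl fun I hI => ?_
  rw [subsetTerm_insert_insert hb,
    subsetTerm_insert_of_notMem hb fun h => hb (mem_powerset.1 hI h),
    symProd_flipVar_eq ht hu huu, symProd_flipVar_mul_eq ht hub hu huu]
  field_simp
  ring

/-- The terms of `I` and `insert b I`, for `b ∉ I`, cancel. -/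
theorem clearedSubsetSum_insert_self (ht : t ≠ 0) (hb : b ∉ U) (hub : u b ≠ 0)
    (hu : ∀ k ∈ U, u k ≠ 0) (huu : ∀ k ∈ U, t * u b * u k ≠ 1 ∧ u b ≠ u k)
    (hS : symProd x S (u b) ≠ 0) : clearedSubsetSum t x S u (insert b U) (u b) = 0 := by
  rw [clearedSubsetSum, sum_powerset_insert hb, ← sum_add_distrib]
  refine sum_eq_zero fun I hI => ?_
  have hbI : b ∉ I := fun h => hb (mem_powerset.1 hI h)
  have hv : ∀ z, symProd (flipVar t u (insert b I)) U z = symProd (flipVar t u I) U z :=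
    fun z => symProd_congr fun k hk => flipVar_insert_of_ne (ne_of_mem_of_not_mem hk hb)
  simp only [symProd_insert hb, hv, flipVar_of_mem (mem_insert_self b I), flipVar_of_notMem hbI,
    card_insert_of_notMem hb]
  rw [subsetTerm_insert_insert hb, subsetTerm_insert_of_notMem hb hbI,
    symProd_flipVar_eq ht hu huu, symProd_flipVar_mul_eq ht hub hu huu]
  field_simp
  ring

theorem subsetFactor_insert [DecidableEq ι] (ht : t ≠ 0) {a : ι} (ha : a ∉ S) {w : F} {k : κ}
    (hw : w = x a ∨ w = (x a)⁻¹) (hw0 : w ≠ 0) (huk : u k ≠ 0) (h₁ : u k * w ≠ 1)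
    (h₂ : u k ≠ w) :
    (1 - w * flipVar t u I k) * (1 - w / flipVar t u I k) *
        subsetFactor t x (insert a S) u I k =
      hlFactor t (u k / w) * ((1 - w / u k) * (1 - t * w * u k)) * subsetFactor t x S u I k := by
  have h₁' : 1 - w * u k ≠ 0 := sub_ne_zero.2 (mul_comm w _ ▸ h₁.symm)
  have h₂' : w - u k ≠ 0 := sub_ne_zero.2 h₂.symm
  unfold flipVar subsetFactor hlFactor
  split_ifs
  · simp only [symProd_insert_of_eq_or_eq_inv ha hw]
    rw [mul_div_mul_comm]
    generalize symProd x S (t * u k) / symProd x S (u k) = R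
    field_simp
  · rw [card_insert_of_notMem ha]
    field_simp
    ring

/-- The value `w` is a zero of `symProd x (insert a S)`, so only the first of the two products in
the brackets contributes. -/
theorem clearedSubsetSum_insert [DecidableEq ι] (ht : t ≠ 0) {a : ι} (ha : a ∉ S) {w : F}
    (hw : w = x a ∨ w = (x a)⁻¹) (hxa : x a ≠ 0) (hu : ∀ k ∈ U, u k ≠ 0)
    (hux : ∀ k ∈ U, u k * x a ≠ 1 ∧ u k ≠ x a) :
    clearedSubsetSum t x (insert a S) u U w =
      t ^ #U * twistedSymProd t u U w * symProd x (insert a S) (t * w) *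
        (∏ k ∈ U, hlFactor t (u k / w)) * weightedSubsetSum t x S u U := by
  have hw0 : w ≠ 0 := by rcases hw with rfl | rfl; exacts [hxa, inv_ne_zero hxa]
  have huw : ∀ k ∈ U, u k * w ≠ 1 ∧ u k ≠ w := by
    intro k hk
    rcases hw with rfl | rfl
    · exact hux k hk
    · rw [ne_eq, mul_inv_eq_one₀ hxa, ne_eq, ← mul_eq_one_iff_eq_inv₀ hxa]
      exact (hux k hk).symm
  have hroot : symProd x (insert a S) w = 0 := by
    rw [symProd_insert_of_eq_or_eq_inv ha hw, div_self hw0, sub_self, mul_zero, zero_mul]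
  rw [clearedSubsetSum, weightedSubsetSum, mul_sum]
  refine sum_congr rfl fun I _ => ?_
  have hprod := prod_congr (rfl : U = U) fun k hk =>
    subsetFactor_insert (I := I) ht ha hw hw0 (hu k hk) (huw k hk).1 (huw k hk).2
  simp only [prod_mul_distrib] at hprod
  rw [hroot, subsetTerm, subsetTerm]
  simp only [symProd, twistedSymProd, prod_mul_distrib]
  linear_combination (t ^ #U * pairProd U
    (fun k l => (hlFactor t (flipVar t u I k * flipVar t u I l))⁻¹) *
      ((∏ i ∈ insert a S, (1 - t * w * x i)) * ∏ i ∈ insert a S, (1 - t * w / x i))) * hprod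

end SubsetSums

section ShiftedFactorial

variable {F : Type*} [Field F] {t : F}

/-- The constant `(-t;t)_{n-r}`, where `n - r` may be negative. -/
def shiftedFactorial (t : F) (n r : ℕ) : F :=
  if r ≤ n then ∏ k ∈ range (n - r), (t ^ (k + 1) + 1)
  else (∏ k ∈ range (r - n), ((t ^ k)⁻¹ + 1))⁻¹

theorem shiftedFactorial_zero_zero (t : F) : shiftedFactorial t 0 0 = 1 := by
  simp [shiftedFactorial]

theorem shiftedFactorial_succ_succ (t : F) (n r : ℕ) :
    shiftedFactorial t (n + 1) (r + 1) = shiftedFactorial t n r := by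
  simp only [shiftedFactorial, add_le_add_iff_right, Nat.add_sub_add_right]

theorem shiftedFactorial_add_left (t : F) (r m : ℕ) :
    shiftedFactorial t (r + m) r = ∏ k ∈ range m, (t ^ (k + 1) + 1) := by
  rw [shiftedFactorial, if_pos (Nat.le_add_right r m), Nat.add_sub_cancel_left]

theorem shiftedFactorial_add_right (t : F) (n m : ℕ) :
    shiftedFactorial t n (n + m) = (∏ k ∈ range m, ((t ^ k)⁻¹ + 1))⁻¹ := by
  rcases m.eq_zero_or_pos with rfl | hm
  · simp [shiftedFactorial]
  · rw [shiftedFactorial, if_neg (by omega), Nat.add_sub_cancel_left]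

theorem add_mul_shiftedFactorial_succ (ht : t ≠ 0) {n r : ℕ}
    (hr : n ≤ r → t ^ (r - n) + 1 ≠ 0) :
    (t ^ r + t ^ n) * shiftedFactorial t n (r + 1) = t ^ r * shiftedFactorial t n r := by
  rcases lt_or_ge r n with h | h
  · obtain ⟨m, rfl⟩ := Nat.exists_eq_add_of_lt h
    rw [add_assoc r m, shiftedFactorial_add_left, add_comm m, ← add_assoc,
      shiftedFactorial_add_left, add_comm 1, prod_range_succ]
    ring
  · obtain ⟨m, rfl⟩ := Nat.exists_eq_add_of_le h
    have hm : 1 + t ^ m ≠ 0 := by simpa [add_comm] using hr h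
    rw [add_assoc n, shiftedFactorial_add_right, shiftedFactorial_add_right, prod_range_succ,
      mul_inv, inv_eq_one_div (t ^ m), div_add_one (pow_ne_zero m ht), pow_add]
    field_simp
    ring

end ShiftedFactorial

section Induction

variable {ι κ F : Type*} [Field F] {t : F} {x : ι → F} {u : κ → F}

/-- The nondegeneracy conditions under which all denominators of the identity are nonzero. -/
structure Admissible (t : F) (x : ι → F) (u : κ → F) : Prop where
  t_ne_zero : t ≠ 0
  x_ne_zero : ∀ i, x i ≠ 0
  u_ne_zero : ∀ k, u k ≠ 0
  x_sq_ne_one : ∀ i, x i ^ 2 ≠ 1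
  x_mul_x : ∀ i j, i ≠ j → x i * x j ≠ 1 ∧ x i ≠ x j
  u_mul_x : ∀ k i, u k * x i ≠ 1 ∧ u k ≠ x i
  u_mul_u : ∀ k l, k ≠ l → t * u k * u l ≠ 1 ∧ u k ≠ u l

/-- The values of the auxiliary variable at which the identity of polynomials is checked. -/
def nodes (x : ι → F) (u : κ → F) : Set F :=
  Set.range x ∪ Set.range x⁻¹ ∪ Set.range u

/-- Admissible parameters for which the involution `z ↦ 1 / (t z)` moves every node to a value
that is not a node. -/
structure Generic (t : F) (x : ι → F) (u : κ → F) : Prop extends Admissible t x u where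
  nodes_mul_nodes : ∀ z ∈ nodes x u, ∀ w ∈ nodes x u, t * z * w ≠ 1

theorem x_mem_nodes (i : ι) : x i ∈ nodes x u := .inl <| .inl ⟨i, rfl⟩

theorem inv_x_mem_nodes (i : ι) : (x i)⁻¹ ∈ nodes x u := .inl <| .inr ⟨i, rfl⟩

theorem u_mem_nodes (k : κ) : u k ∈ nodes x u := .inr ⟨k, rfl⟩

/-- The identity obtained from the main one by inserting the auxiliary variable `z`. The constant
is that of `n` and `r + 1`: its quotient by that of `n` and `r` compensates the factor `t^r + t^n`
which `clearedSubsetSum` acquires at `z = 0`. -/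
def ClearedIdentity [LinearOrder ι] [LinearOrder κ] (t : F) (x : ι → F) (S : Finset ι)
    (u : κ → F) (U : Finset κ) (z : F) : Prop :=
  t ^ #U * clearedSignSum t x S u U z * twistedSymProd t u U z =
    shiftedFactorial t #S (#U + 1) * clearedSubsetSum t x S u U z

/-- The identity of the theorem for the variables `x i`, `i ∈ S`, and `u k`, `k ∈ U`. -/
def MainIdentity [LinearOrder ι] [LinearOrder κ] (t : F) (x : ι → F) (S : Finset ι)
    (u : κ → F) (U : Finset κ) : Prop :=
  signSum t x S u U = shiftedFactorial t #S #U * weightedSubsetSum t x S u U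

namespace Admissible

theorem symProd_u_ne_zero (h : Admissible t x u) (S : Finset ι) (k : κ) :
    symProd x S (u k) ≠ 0 :=
  symProd_ne_zero (fun i _ => h.x_ne_zero i) fun i _ => h.u_mul_x k i

theorem x_injective (h : Admissible t x u) : Function.Injective x := fun i j hij => by
  by_contra hne
  exact (h.x_mul_x i j hne).2 hij

theorem u_injective (h : Admissible t x u) : Function.Injective u := fun k l hkl => by
  by_contra hne
  exact (h.u_mul_u k l hne).2 hkl

theorem card_insert_image [DecidableEq F] (h : Admissible t x u) {S : Finset ι} {U : Finset κ}
    {w : F} (hwx : ∀ i ∈ S, x i ≠ w) (hwu : ∀ k ∈ U, u k ≠ w) :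
    #(insert w (S.image x ∪ U.image u)) = #S + #U + 1 := by
  rw [card_insert_of_notMem, card_union_of_disjoint, card_image_of_injective _ h.x_injective,
    card_image_of_injective _ h.u_injective]
  · simp only [disjoint_left, mem_image]
    rintro _ ⟨i, _, rfl⟩ ⟨k, _, hk⟩
    exact (h.u_mul_x k i).2 hk
  · simp only [mem_union, mem_image]
    rintro (⟨i, hi, hiw⟩ | ⟨k, hk, hkw⟩)
    exacts [hwx i hi hiw, hwu k hk hkw]

variable [LinearOrder ι] [LinearOrder κ] {S : Finset ι} {U : Finset κ}

theorem clearedIdentity_zero_iff (h : Admissible t x u)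
    (hr : #S ≤ #U → t ^ (#U - #S) + 1 ≠ 0) :
    ClearedIdentity t x S u U 0 ↔ MainIdentity t x S u U := by
  rw [ClearedIdentity, clearedSignSum_zero, twistedSymProd_zero, clearedSubsetSum_zero, mul_one,
    ← mul_assoc, mul_comm (shiftedFactorial _ _ _), add_mul_shiftedFactorial_succ h.t_ne_zero hr,
    mul_assoc, mul_right_inj' (pow_ne_zero _ h.t_ne_zero), MainIdentity]

theorem clearedIdentity_of_erase (h : Admissible t x u) {a : ι} (ha : a ∈ S) {w : F}
    (hw : w = x a ∨ w = (x a)⁻¹) (hm : MainIdentity t x (S.erase a) u U) :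
    ClearedIdentity t x S u U w := by
  have haS := notMem_erase a S
  rw [← insert_erase ha, ClearedIdentity,
    clearedSignSum_insert haS hw (h.x_ne_zero a) (h.x_sq_ne_one a) (fun i _ => h.x_ne_zero i)
      fun i hi => h.x_mul_x a i (ne_of_mem_erase hi).symm,
    clearedSubsetSum_insert h.t_ne_zero haS hw (h.x_ne_zero a) (fun k _ => h.u_ne_zero k)
      fun k _ => h.u_mul_x k a, card_insert_of_notMem haS, shiftedFactorial_succ_succ, hm]
  ring

theorem clearedIdentity_u (h : Admissible t x u) {k : κ} (hk : k ∈ U) :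
    ClearedIdentity t x S u U (u k) := by
  have hsub : clearedSubsetSum t x S u U (u k) = 0 := by
    rw [← insert_erase hk]
    exact clearedSubsetSum_insert_self h.t_ne_zero (notMem_erase k U) (h.u_ne_zero k)
      (fun l _ => h.u_ne_zero l) (fun l hl => h.u_mul_u k l (ne_of_mem_erase hl).symm)
      (h.symProd_u_ne_zero S k)
  rw [ClearedIdentity, twistedSymProd_eq_zero hk (h.u_ne_zero k), hsub, mul_zero, mul_zero]

theorem mainIdentity_empty_insert (h : Admissible t x u) {b : κ} (hb : b ∉ U)
    (hz : ClearedIdentity t x ∅ u U (u b)) : MainIdentity t x ∅ u (insert b U) := by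
  have huu : ∀ k ∈ U, t * u b * u k ≠ 1 ∧ u b ≠ u k := fun k hk =>
    h.u_mul_u b k (ne_of_mem_of_not_mem hk hb).symm
  have hQ := twistedSymProd_ne_zero (fun k _ => h.u_ne_zero k) huu
  rw [ClearedIdentity, clearedSignSum_empty, clearedSubsetSum_of_notMem h.t_ne_zero hb
    (h.u_ne_zero b) (fun k _ => h.u_ne_zero k) huu (h.symProd_u_ne_zero ∅ b)] at hz
  simp only [symProd, prod_empty, mul_one] at hz
  rw [MainIdentity, signSum_empty, card_insert_of_notMem hb]
  refine mul_left_cancel₀ (mul_ne_zero (pow_ne_zero #U h.t_ne_zero) hQ) ?_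
  exact (mul_one _).trans (hz.trans (by ring))

end Admissible

namespace Generic

variable [LinearOrder ι] [LinearOrder κ] {S : Finset ι} {U : Finset κ}

/-- Both sides are reciprocal of degree `2 (n + r)`, so `n + r + 1` values suffice: the variables
themselves provide `n + r` of them. -/
theorem clearedIdentity (h : Generic t x u) {w : F} (hw : w = 0 ∨ w ∈ nodes x u)
    (hwx : ∀ i ∈ S, x i ≠ w) (hwu : ∀ k ∈ U, u k ≠ w)
    (hS : ∀ a ∈ S, MainIdentity t x (S.erase a) u U) (hcw : ClearedIdentity t x S u U w) (z : F) :
    ClearedIdentity t x S u U z := by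
  classical
  have hA : ∀ z ∈ insert w (S.image x ∪ U.image u), z = 0 ∨ z ∈ nodes x u := by
    simp only [forall_mem_insert, forall_mem_union, forall_mem_image]
    exact ⟨hw, fun i _ => .inr (x_mem_nodes i), fun k _ => .inr (u_mem_nodes k)⟩
  have hleft := ((isReciprocalPair_clearedSignSum (u := u) (U := U) h.t_ne_zero
    fun i (_ : i ∈ S) => h.x_ne_zero i).const_mul (t ^ #U)).mul
    (isReciprocalPair_twistedSymProd h.t_ne_zero fun k (_ : k ∈ U) => h.u_ne_zero k)
  have hright := (isReciprocalPair_clearedSubsetSum h.t_ne_zero (fun i (_ : i ∈ S) => h.x_ne_zero i)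
    fun k (_ : k ∈ U) => h.u_ne_zero k).const_mul (shiftedFactorial t #S (#U + 1))
  refine congrFun (hleft.eq_of_eqOn h.t_ne_zero hright (fun z hz w hw => ?_)
    (by rw [h.card_insert_image hwx hwu]; exact Nat.lt_succ_self _) ?_) z
  · rcases hA z hz with rfl | hz
    · simp
    rcases hA w hw with rfl | hw
    · simp
    exact h.nodes_mul_nodes z hz w hw
  · simp only [forall_mem_insert, forall_mem_union, forall_mem_image]
    exact ⟨hcw, fun a ha => h.clearedIdentity_of_erase ha (.inl rfl) (hS a ha),
      fun k hk => h.clearedIdentity_u hk⟩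

theorem mainIdentity_empty (h : Generic t x u) (U : Finset κ) (hU : ∀ k < #U, t ^ k + 1 ≠ 0) :
    MainIdentity t x ∅ u U := by
  induction U using Finset.induction_on with
  | empty =>
    simp [MainIdentity, signSum_empty, shiftedFactorial_zero_zero, weightedSubsetSum, subsetTerm,
      pairProd]
  | insert b U hb ih =>
    rw [card_insert_of_notMem hb] at hU
    have hm := ih fun k hk => hU k (hk.trans (Nat.lt_succ_self _))
    have h0 := (h.clearedIdentity_zero_iff fun _ => hU _ (by simp)).2 hm
    exact h.mainIdentity_empty_insert hb <| h.clearedIdentity (.inl rfl) (by simp)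
      (fun k _ => h.u_ne_zero k) (by simp) h0 _

theorem mainIdentity (h : Generic t x u) (S : Finset ι) (U : Finset κ)
    (hU : ∀ k < #U, t ^ k + 1 ≠ 0) : MainIdentity t x S u U := by
  induction S using Finset.strongInduction with
  | H S ih =>
    obtain rfl | ⟨a, ha⟩ := S.eq_empty_or_nonempty
    · exact h.mainIdentity_empty U hU
    have hS : ∀ i ∈ S, MainIdentity t x (S.erase i) u U := fun i hi => ih _ (erase_ssubset hi)
    have hroot : ClearedIdentity t x S u U (x a)⁻¹ :=
      h.clearedIdentity_of_erase ha (.inr rfl) (hS a ha)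
    refine (h.clearedIdentity_zero_iff fun hSU => hU _ ?_).1 <|
      h.clearedIdentity (.inr (inv_x_mem_nodes a)) (fun i _ => ?_) (fun k _ => ?_) hS hroot 0
    · have := card_pos.2 ⟨a, ha⟩
      omega
    · rw [ne_eq, ← mul_eq_one_iff_eq_inv₀ (h.x_ne_zero a)]
      rcases eq_or_ne i a with rfl | hia
      · rw [← sq]
        exact h.x_sq_ne_one i
      · exact (h.x_mul_x i a hia).1
    · rw [ne_eq, ← mul_eq_one_iff_eq_inv₀ (h.x_ne_zero a)]
      exact (h.u_mul_x k a).1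

end Generic

end Induction

section Continuity

open Filter Topology

variable {ι κ K : Type*} [Field K] [TopologicalSpace K] {t : K} {x : ι → K} {S : Finset ι}
  {u : κ → K} {U : Finset κ}

theorem Admissible.eventually_generic [Finite ι] [Finite κ] [T1Space K] (h : Admissible t x u) :
    ∀ᶠ s in 𝓝[≠] t, Generic s x u := by
  have hfin : (nodes x u).Finite :=
    ((Set.finite_range _).union (Set.finite_range _)).union (Set.finite_range _)
  have hnodes : ∀ᶠ s in cofinite, ∀ z ∈ nodes x u, ∀ w ∈ nodes x u, s * z * w ≠ 1 := by
    refine (hfin.eventually_all).2 fun z _ => (hfin.eventually_all).2 fun w _ => ?_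
    refine (eventually_cofinite_ne (z * w)⁻¹).mono fun s hs hsz => hs ?_
    exact eq_inv_of_mul_eq_one_left (mul_assoc s z w ▸ hsz)
  refine nhdsNE_le_cofinite t ?_
  filter_upwards [hnodes, eventually_cofinite_ne 0] with s hs hs0
  exact ⟨⟨hs0, h.x_ne_zero, h.u_ne_zero, h.x_sq_ne_one, h.x_mul_x, h.u_mul_x, fun k l hkl =>
    ⟨hs _ (u_mem_nodes k) _ (u_mem_nodes l), (h.u_mul_u k l hkl).2⟩⟩, hs⟩

variable [IsTopologicalDivisionRing K]

theorem continuous_signSum [LinearOrder ι] : Continuous fun s => signSum s x S u U := by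
  have hfactor : ∀ z : K, Continuous fun s => hlFactor s z := fun z => by
    unfold hlFactor
    fun_prop
  unfold signSum signTerm pairProd
  refine continuous_finsetSum _ fun J _ => .mul (.mul ?_ ?_) ?_
  · exact continuous_finsetProd _ fun i _ => hfactor _
  · exact continuous_finsetProd _ fun i _ => continuous_finsetProd _ fun j _ => hfactor _
  · exact continuous_finsetProd _ fun k _ => continuous_finsetProd _ fun i _ => hfactor _

theorem continuousAt_flipVar [DecidableEq κ] {I : Finset κ} {k : κ} (ht : t ≠ 0) (hu : u k ≠ 0) :
    ContinuousAt (fun s => flipVar s u I k) t := by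
  unfold flipVar
  split_ifs
  · exact continuousAt_const
  · exact (continuousAt_id.mul continuousAt_const).inv₀ (mul_ne_zero ht hu)

theorem continuousAt_weightedSubsetSum [LinearOrder κ] (h : Admissible t x u) :
    ContinuousAt (fun s => weightedSubsetSum s x S u U) t := by
  have hflip : ∀ I k, ContinuousAt (fun s => flipVar s u I k) t := fun I k =>
    continuousAt_flipVar h.t_ne_zero (h.u_ne_zero k)
  unfold weightedSubsetSum subsetTerm pairProd subsetFactor
  refine tendsto_finsetSum _ fun I _ => .mul ?_ ?_
  · refine tendsto_finsetProd _ fun k _ => tendsto_finsetProd _ fun l hl => ?_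
    have hv : ContinuousAt (fun s => flipVar s u I k * flipVar s u I l) t :=
      (hflip I k).mul (hflip I l)
    obtain ⟨h₁, h₂⟩ := h.u_mul_u k l (mem_filter.1 hl).2.ne
    have hne := flipVar_mul_flipVar_ne_one (I := I) h.t_ne_zero (h.u_ne_zero k) (h.u_ne_zero l)
      h₁ h₂
    simp only [hlFactor, inv_div]
    refine (continuousAt_const.sub hv).div (continuousAt_const.sub (continuousAt_id.mul hv)) ?_
    exact sub_ne_zero.2 fun h => hne <| (mul_assoc _ _ _).trans h.symm
  · refine tendsto_finsetProd _ fun k _ => ?_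
    split_ifs
    · unfold symProd
      exact ContinuousAt.div_const (by fun_prop) _
    · exact continuousAt_id.pow _

theorem continuousAt_shiftedFactorial (ht : t ≠ 0) {n r : ℕ} (hr : ∀ k < r, t ^ k + 1 ≠ 0) :
    ContinuousAt (fun s => shiftedFactorial s n r) t := by
  unfold shiftedFactorial
  split_ifs
  · fun_prop
  · refine ContinuousAt.inv₀ (tendsto_finsetProd _ fun k _ =>
      ((continuousAt_id.pow k).inv₀ (pow_ne_zero k ht)).add continuousAt_const) ?_
    refine prod_ne_zero_iff.2 fun k hk => ?_
    have hk : k < r := (mem_range.1 hk).trans_le (Nat.sub_le r n)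
    rw [inv_eq_one_div, div_add_one (pow_ne_zero k ht), add_comm]
    exact div_ne_zero (hr k hk) (pow_ne_zero k ht)

/-- Both sides are continuous in `t`, and arbitrarily close to `t` there are generic values. -/
theorem Admissible.mainIdentity_of_nhdsNE_neBot [LinearOrder ι] [LinearOrder κ] [Finite ι]
    [Finite κ] [T2Space K] [(𝓝[≠] t).NeBot] (h : Admissible t x u) (hU : ∀ k < #U, t ^ k + 1 ≠ 0) :
    MainIdentity t x S u U := by
  have hpow : ∀ᶠ s in 𝓝[≠] t, ∀ k < #U, s ^ k + 1 ≠ 0 := by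
    refine ((Set.finite_lt_nat #U).eventually_all.2 fun k hk => ?_).filter_mono nhdsWithin_le_nhds
    exact ((continuous_id.pow k).add continuous_const).continuousAt.eventually_ne (hU k hk)
  have hright := (continuousAt_shiftedFactorial (n := #S) h.t_ne_zero hU).mul
    (continuousAt_weightedSubsetSum (S := S) (U := U) h)
  refine tendsto_nhds_unique_of_eventuallyEq
    (continuous_signSum.continuousAt.mono_left (nhdsWithin_le_nhds (s := {t}ᶜ)))
    (hright.mono_left nhdsWithin_le_nhds) ?_
  filter_upwards [h.eventually_generic, hpow] with s hs hsU
  exact hs.mainIdentity S U hsU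

end Continuity

section Transport

variable {ι κ F K : Type*} [Field F] [Field K] (f : F →+* K)
  {t : F} {x : ι → F} {S : Finset ι} {u : κ → F} {U : Finset κ}

theorem Admissible.map (h : Admissible t x u) : Admissible (f t) (f ∘ x) (f ∘ u) where
  t_ne_zero := (map_ne_zero f).2 h.t_ne_zero
  x_ne_zero i := (map_ne_zero f).2 (h.x_ne_zero i)
  u_ne_zero k := (map_ne_zero f).2 (h.u_ne_zero k)
  x_sq_ne_one i := by
    simpa only [Function.comp_apply, ← map_pow, ne_eq, map_eq_one_iff f f.injective] using
      h.x_sq_ne_one i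
  x_mul_x i j hij := by
    simpa only [Function.comp_apply, ← map_mul, ne_eq, map_eq_one_iff f f.injective,
      f.injective.eq_iff] using h.x_mul_x i j hij
  u_mul_x k i := by
    simpa only [Function.comp_apply, ← map_mul, ne_eq, map_eq_one_iff f f.injective,
      f.injective.eq_iff] using h.u_mul_x k i
  u_mul_u k l hkl := by
    simpa only [Function.comp_apply, ← map_mul, ne_eq, map_eq_one_iff f f.injective,
      f.injective.eq_iff] using h.u_mul_u k l hkl

theorem map_flipVar [DecidableEq ι] (s : F) (x : ι → F) (I : Finset ι) (i : ι) :
    f (flipVar s x I i) = flipVar (f s) (f ∘ x) I i := by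
  simp only [flipVar, apply_ite f, map_inv₀, map_mul, Function.comp_apply]

theorem map_signSum [LinearOrder ι] :
    f (signSum t x S u U) = signSum (f t) (f ∘ x) S (f ∘ u) U := by
  have hpair : ∀ g : ι → ι → F, f (pairProd S g) = pairProd S fun i j => f (g i j) :=
    map_pairProd (f : F →* K) S
  simp only [signSum, signTerm, map_sum, map_mul, map_prod, hpair, map_hlFactor, map_pow, map_div₀,
    map_flipVar, map_one, Function.comp_apply]

theorem map_weightedSubsetSum [LinearOrder κ] :
    f (weightedSubsetSum t x S u U) = weightedSubsetSum (f t) (f ∘ x) S (f ∘ u) U := by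
  have hpair : ∀ g : κ → κ → F, f (pairProd U g) = pairProd U fun k l => f (g k l) :=
    map_pairProd (f : F →* K) U
  simp only [weightedSubsetSum, subsetTerm, subsetFactor, symProd, map_sum, map_mul, map_prod,
    hpair, map_inv₀, map_hlFactor, map_flipVar, apply_ite f, map_div₀, map_pow, map_sub, map_one,
    Function.comp_apply]

theorem map_shiftedFactorial (n r : ℕ) :
    f (shiftedFactorial t n r) = shiftedFactorial (f t) n r := by
  simp only [shiftedFactorial, apply_ite f, map_inv₀, map_prod, map_add, map_pow, map_one]

theorem mainIdentity_map_iff [LinearOrder ι] [LinearOrder κ] :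
    MainIdentity (f t) (f ∘ x) S (f ∘ u) U ↔ MainIdentity t x S u U := by
  rw [MainIdentity, MainIdentity, ← map_signSum, ← map_shiftedFactorial, ← map_weightedSubsetSum,
    ← map_mul, f.injective.eq_iff]

end Transport

section LaurentSeries

open Filter Topology

variable {F : Type*} [Field F]

theorem nhdsNE_neBot_laurentSeries (t : LaurentSeries F) : (𝓝[≠] t).NeBot := by
  let X : LaurentSeries F := HahnSeries.single 1 1
  have hX : Tendsto (fun n => X ^ n) atTop (𝓝 0) :=
    Valued.tendsto_zero_pow_of_le_exp_neg_one (LaurentSeries.valuation_single_zpow F 1).le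
  have ht : Tendsto (fun n => t + X ^ n) atTop (𝓝[≠] t) := by
    refine tendsto_nhdsWithin_iff.2 ⟨by simpa using hX.const_add t, .of_forall fun n => ?_⟩
    have hX0 : X ≠ 0 := HahnSeries.single_ne_zero one_ne_zero
    simpa using pow_ne_zero n hX0
  exact ht.neBot

theorem Admissible.mainIdentity {ι κ : Type*} [LinearOrder ι] [LinearOrder κ] [Finite ι] [Finite κ]
    {t : F} {x : ι → F} {S : Finset ι} {u : κ → F} {U : Finset κ} (h : Admissible t x u)
    (hU : ∀ k < #U, t ^ k + 1 ≠ 0) : MainIdentity t x S u U := by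
  let f : F →+* LaurentSeries F := HahnSeries.C
  have := nhdsNE_neBot_laurentSeries (f t)
  rw [← mainIdentity_map_iff f]
  refine (h.map f).mainIdentity_of_nhdsNE_neBot fun k hk => ?_
  rw [← map_pow, ← map_one f, ← map_add]
  exact (map_ne_zero f).2 (hU k hk)

end LaurentSeries

section FinIndexed

variable {F : Type*} [Field F] {n r : ℕ}

theorem sgnVar_eq_flipVar (x : Fin n → F) (σ : Fin n → Bool) :
    sgnVar x σ = flipVar 1 x {i | σ i = true} := by
  funext i
  simp only [sgnVar, flipVar, mem_filter_univ, one_mul]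

theorem signTerm_univ (t : F) (u : Fin r → F) (y : Fin n → F) :
    signTerm t univ u univ y =
      PhiC t y * ∏ k, ∏ i, (1 - t * u k / y i) / (1 - u k / y i) := by
  simp only [signTerm, PhiC, pairProd_univ_fin, hlFactor, mul_div_assoc, mul_assoc]

theorem signSum_univ (t : F) (x : Fin n → F) (u : Fin r → F) :
    signSum t x univ u univ = ∑ σ : Fin n → Bool, PhiC t (sgnVar x σ) *
      ∏ k, ∏ i, (1 - t * u k / sgnVar x σ i) / (1 - u k / sgnVar x σ i) := by
  simp only [← signTerm_univ, sgnVar_eq_flipVar]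
  rw [signSum, powerset_univ]
  exact sum_bij' (fun J _ i => decide (i ∈ J)) (fun σ _ => univ.filter fun i => σ i = true)
    (by simp) (by simp) (by simp) (by simp) (by simp)

theorem symProd_univ_div (x : Fin n → F) (t z : F) :
    symProd x univ (t * z) / symProd x univ z = RC t x z := by
  simp only [symProd, RC, ← prod_div_distrib, mul_div_mul_comm]

theorem prod_subsetFactor_univ (t : F) (x : Fin n → F) (u : Fin r → F) (I : Finset (Fin r)) :
    ∏ k, subsetFactor t x univ u I k = t ^ (n * (r - #I)) * ∏ i ∈ I, RC t x (u i) := by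
  simp only [subsetFactor, symProd_univ_div, prod_ite, prod_const, card_univ, Fintype.card_fin,
    ← pow_mul, filter_univ_mem, filter_notMem_eq_sdiff, ← compl_eq_univ_sdiff, card_compl]
  exact mul_comm _ _

theorem weightedSubsetSum_univ (t : F) (x : Fin n → F) (u : Fin r → F) :
    weightedSubsetSum t x univ u univ = ∑ I : Finset (Fin r), t ^ (n * (r - #I)) *
      (∏ i, ∏ j ∈ Ioi i, (1 - flipVar t u I i * flipVar t u I j) /
        (1 - t * flipVar t u I i * flipVar t u I j)) * ∏ i ∈ I, RC t x (u i) := by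
  rw [weightedSubsetSum, powerset_univ]
  refine sum_congr rfl fun I _ => ?_
  simp only [subsetTerm, prod_subsetFactor_univ, pairProd_univ_fin, hlFactor, inv_div, mul_assoc]
  exact mul_left_comm _ _ _

end FinIndexed

/-- The main multivariate rational identity (Theorem 6):
`T(Φ ∏_{k,i} (1-tu_k/x_i)/(1-u_k/x_i)) = (-t;t)_{n-r} ∑_{I⊆{1,…,r}} c_I ∏_{i∈I} R(u_i)`,
where `T` sums over all substitutions `x_i → x_i^{±1}`,
`c_I = t^{n(r-|I|)} ∏_{i<j} (1-v_iv_j)/(1-tv_iv_j)` with `v_i = u_i` for `i ∈ I`,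
`v_i = 1/(tu_i)` otherwise, and `(-t;t)_{n-r} = ∏_{k=1}^{n-r}(t^k+1)` if `r ≤ n`,
`= (∏_{k=0}^{r-n-1}(t^{-k}+1))⁻¹` if `n < r`. -/
theorem stmt7 {F : Type*} [Field F] {n r : ℕ} (x : Fin n → F) (u : Fin r → F) (t : F)
    (ht0 : t ≠ 0) (ht2 : ∀ k : ℕ, t ^ k + 1 ≠ 0)
    (hx0 : ∀ i, x i ≠ 0) (hu0 : ∀ k, u k ≠ 0)
    (hx2 : ∀ i, (x i) ^ 2 ≠ 1)
    (hxx : ∀ i j, i ≠ j → x i * x j ≠ 1 ∧ x i ≠ x j)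
    (hux : ∀ k i, u k * x i ≠ 1 ∧ u k ≠ x i)
    (huu : ∀ k l, k ≠ l → t * u k * u l ≠ 1 ∧ u k ≠ u l) :
    ∑ σ : Fin n → Bool,
      PhiC t (sgnVar x σ) * ∏ k, ∏ i, (1 - t * u k / sgnVar x σ i) / (1 - u k / sgnVar x σ i)
      = (if r ≤ n then ∏ k ∈ Finset.range (n - r), (t ^ (k + 1) + 1)
          else (∏ k ∈ Finset.range (r - n), ((t ^ k)⁻¹ + 1))⁻¹) *
        ∑ I : Finset (Fin r),
          t ^ (n * (r - I.card)) *
          (∏ i, ∏ j ∈ Finset.Ioi i,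
            (1 - (if i ∈ I then u i else (t * u i)⁻¹) * (if j ∈ I then u j else (t * u j)⁻¹)) /
            (1 - t * (if i ∈ I then u i else (t * u i)⁻¹) *
              (if j ∈ I then u j else (t * u j)⁻¹))) *
          ∏ i ∈ I, RC t x (u i) := by
  have h : Admissible t x u := ⟨ht0, hx0, hu0, hx2, hxx, hux, huu⟩
  have hmain := h.mainIdentity (S := univ) (U := univ) fun k _ => ht2 k
  rw [MainIdentity, signSum_univ, weightedSubsetSum_univ, card_fin, card_fin] at hmain
  exact hmain
end

section
/- For n variables x_1,…,x_n (nonzero), let h_k denote the complete homogeneous symmetric function of degree k in the 2n quantities x_1,…,x_n,1/x_1,…,1/x_n, i.e. ∑_{k≥0} u^k h_k = ∏_{i=1}^n 1/((1-u x_i)(1-u/x_i)). Then the irreducible character of Sp(2n,ℂ) with highest weight λ_1 ε_1 + λ_2 ε_2 (λ_1 ≥ λ_2 ≥ 0 integers) satisfies χ_{λ_1 ε_1 + λ_2 ε_2} = h_{λ_1} h_{λ_2} + h_{λ_1} h_{λ_2-2} - h_{λ_1+1} h_{λ_2-1} - h_{λ_1-1} h_{λ_2-1}, where h_m = 0 for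 m < 0. -/
open Finset

/-- The complete homogeneous symmetric function `h_k` of the `2n` quantities
`x_1,…,x_n, 1/x_1,…,1/x_n`, with `h_k = 0` for `k < 0`. -/
noncomputable def hComplete {F : Type*} [Field F] {n : ℕ} (x : Fin n → F) (k : ℤ) : F :=
  if k < 0 then 0
  else ∑ c ∈ Finset.Nat.antidiagonalTuple (2 * n) k.toNat,
    ∏ a : Fin (2 * n),
      (if h : (a : ℕ) < n then x ⟨a, h⟩ else (x ⟨(a : ℕ) - n, by omega⟩)⁻¹) ^ (c a)

/-- The entry `(λ+ρ)_i` for `λ = λ₁ε₁ + λ₂ε₂` and `ρ = ∑ (n-i+1)ε_i` (1-indexed). -/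
def wtRho (n : ℕ) (lam1 lam2 : ℕ) (i : Fin n) : ℤ :=
  (if (i : ℕ) = 0 then (lam1 : ℤ) else if (i : ℕ) = 1 then (lam2 : ℤ) else 0) +
    (n - (i : ℕ) : ℕ)

/-!
Put `y_i = x_i + x_i⁻¹`. Since `∑ u ^ k h_k = ∏ j, (1 - u y_j + u ^ 2)⁻¹`, the generating
function of `x_i ^ m - x_i ^ (-m)` over `m ≥ 0` is
`(x_i - x_i⁻¹) u ∏ j ≠ i, (1 - u y_j + u ^ 2) * ∑ u ^ k h_k`. The polynomial factor is palindromic,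
so comparing coefficients and folding the sum about its middle writes the alternant matrix
`(x_i ^ m_j - x_i ^ (-m_j))` as a product `B * J` in which only the Jacobi–Trudi matrix `J`
depends on `m`. For `m = ρ` the matrix `J` is unipotent and the alternant is `δ` by the Vandermonde
determinant, because `(x ^ k - x ^ (-k)) / (x - x⁻¹)` is a monic polynomial of degree `k - 1` in
`x + x⁻¹`; hence `det B = δ`. For a two-row weight all but the first two columns of `J` agree, on
and above the diagonal, with the identity matrix, and `det J` is the leading `2 × 2` minor.
-/

section Determinants

variable {R : Type*} [CommRing R]

lemma det_sub_eq_sum_perm_sum_bool {ι : Type*} [Fintype ι] [DecidableEq ι] (A B : Matrix ι ι R) :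
    (A - B).det = ∑ π : Equiv.Perm ι, ∑ ε : ι → Bool, ((Equiv.Perm.sign π : ℤ) : R) *
      (-1) ^ #{i | ε i = false} * ∏ i, if ε i then A (π i) i else B (π i) i := by
  have expand (π : Equiv.Perm ι) : ∏ i, (A - B) (π i) i = ∑ ε : ι → Bool,
      (-1) ^ #{i | ε i = false} * ∏ i, if ε i then A (π i) i else B (π i) i := by
    have split (i : ι) : (A - B) (π i) i =
        ∑ b : Bool, (if b = false then -1 else 1) * if b then A (π i) i else B (π i) i := by
      simp [sub_eq_add_neg]
    simp_rw [split, Finset.prod_univ_sum, Fintype.piFinset_univ, Finset.prod_mul_distrib,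
      Finset.prod_ite, Finset.prod_const, one_pow, mul_one]
  simp_rw [Matrix.det_apply', expand, Finset.mul_sum, mul_assoc]

lemma det_eval_rev_of_isMonicOfDegree {n : ℕ} (p : ℕ → Polynomial R)
    (hp : ∀ k, (p k).IsMonicOfDegree k) (y : Fin n → R) :
    (Matrix.of fun i j : Fin n => (p j.rev).eval (y i)).det =
      ∏ i, ∏ j ∈ Finset.Ioi i, (y i - y j) := by
  have reverse_vandermonde : (Matrix.projVandermonde (fun _ => 1) y).submatrix
      Fin.revPerm Fin.revPerm = Matrix.vandermonde (y ∘ Fin.rev) := by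
    ext i j
    simp [Matrix.projVandermonde_apply]
  calc (Matrix.of fun i j : Fin n => (p j.rev).eval (y i)).det
    _ = (Matrix.of fun i j : Fin n => (p j).eval ((y ∘ Fin.rev) i)).det := by
        rw [← Matrix.det_submatrix_equiv_self Fin.revPerm]
        congr 1
        ext i j
        simp only [Matrix.submatrix_apply, Matrix.of_apply, Fin.revPerm_apply, Fin.rev_rev,
          Function.comp_apply]
    _ = (Matrix.projVandermonde (fun _ => 1) y).det := by
        rw [← Matrix.det_eval_matrixOfPolynomials_eq_det_vandermonde _ (fun j : Fin n => p j)
          (fun j => (hp j).natDegree_eq) (fun j => (hp j).monic), ← reverse_vandermonde,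
          Matrix.det_submatrix_equiv_self]
    _ = ∏ i, ∏ j ∈ Finset.Ioi i, (y i - y j) := by
        simp [Matrix.det_projVandermonde]

lemma det_eq_one_of_forall_le {n : ℕ} {M : Matrix (Fin n) (Fin n) R}
    (hM : ∀ i j, i ≤ j → M i j = (1 : Matrix (Fin n) (Fin n) R) i j) : M.det = 1 := by
  have lower : M.IsLowerTriangular := fun i j hij => by
    rw [hM i j (show i < j from hij).le, Matrix.one_apply_ne (show i < j from hij).ne]
  rw [Matrix.det_of_isLowerTriangular M lower]
  exact Finset.prod_eq_one fun i _ => by rw [hM i i le_rfl, Matrix.one_apply_eq]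

lemma det_eq_det_submatrix_castAdd {k m : ℕ} {M : Matrix (Fin (k + m)) (Fin (k + m)) R}
    (hM : ∀ i j : Fin (k + m), k ≤ (j : ℕ) → i ≤ j → M i j = (1 : Matrix _ _ R) i j) :
    M.det = (M.submatrix (Fin.castAdd m) (Fin.castAdd m)).det := by
  have blocks : M.submatrix finSumFinEquiv finSumFinEquiv =
      Matrix.fromBlocks (M.submatrix (Fin.castAdd m) (Fin.castAdd m)) 0
        (M.submatrix (Fin.natAdd k) (Fin.castAdd m))
        (M.submatrix (Fin.natAdd k) (Fin.natAdd k)) := by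
    ext (i | i) (j | j)
    case inl.inr =>
      have hij : Fin.castAdd m i < Fin.natAdd k j := by
        rw [Fin.lt_def, Fin.val_castAdd, Fin.val_natAdd]
        omega
      simpa [Matrix.one_apply_ne hij.ne] using hM _ (Fin.natAdd k j) (by simp) hij.le
    all_goals rfl
  have lower_right : (M.submatrix (Fin.natAdd k) (Fin.natAdd k)).det = 1 :=
    det_eq_one_of_forall_le fun i j hij => by
      simpa [Matrix.one_apply] using hM (Fin.natAdd k i) (Fin.natAdd k j) (by simp) (by simpa)
  rw [← Matrix.det_submatrix_equiv_self finSumFinEquiv, blocks, Matrix.det_fromBlocks_zero₁₂,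
    lower_right, mul_one]

end Determinants

section Palindromic

variable {R : Type*}

/-- The sequence `k ↦ h (k + s) + h (k - s)` obtained by letting `T ^ s + T ^ (-s)` act on a
two-sided sequence `h`, where `T` is the unit shift. For `s = 0` it is `h` rather than `2 h`, so
that these sequences are the invariants of `T ↦ T⁻¹` attached to the orbits `{s, -s}`. -/
def symmShift [Add R] (h : ℤ → R) (s : ℕ) (k : ℤ) : R :=
  if s = 0 then h k else h (k + s) + h (k - s)

lemma symmShift_zero [Add R] (h : ℤ → R) : symmShift h 0 = h :=
  funext fun _ => if_pos rfl

lemma symmShift_of_ne_zero [Add R] (h : ℤ → R) {s : ℕ} (hs : s ≠ 0) (k : ℤ) :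
    symmShift h s k = h (k + s) + h (k - s) :=
  if_neg hs

lemma sum_mul_eq_sum_mul_symmShift [CommRing R] {c : ℕ → R} {d : ℕ}
    (hc : ∀ s ≤ d, c (d + s) = c (d - s)) (h : ℤ → R) (k : ℤ) :
    ∑ r ∈ range (2 * d + 1), c r * h (k - r) =
      ∑ s ∈ range (d + 1), c (d - s) * symmShift h s (k - d) := by
  have lower : ∑ r ∈ range d, c r * h (k - r) =
      ∑ s ∈ range d, c (d - (s + 1)) * h (k - d + (s + 1 : ℕ)) := by
    rw [← Finset.sum_range_reflect]
    refine Finset.sum_congr rfl fun s hs => ?_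
    have hs : s < d := Finset.mem_range.mp hs
    rw [show d - 1 - s = d - (s + 1) by omega]
    congr 2
    omega
  have upper : ∑ s ∈ range d, c (d + (s + 1)) * h (k - (d + (s + 1) : ℕ)) =
      ∑ s ∈ range d, c (d - (s + 1)) * h (k - d - (s + 1 : ℕ)) := by
    refine Finset.sum_congr rfl fun s hs => ?_
    rw [hc _ (Finset.mem_range.mp hs)]
    congr 2
    omega
  rw [show 2 * d + 1 = d + (d + 1) by ring, Finset.sum_range_add, Finset.sum_range_succ',
    Finset.sum_range_succ', lower, upper, ← add_assoc, ← Finset.sum_add_distrib]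
  simp [symmShift_zero, symmShift_of_ne_zero, mul_add]

open Polynomial

lemma reflect_prod [CommSemiring R] {ι : Type*} (s : Finset ι) {f : ι → R[X]} {d : ι → ℕ}
    (hf : ∀ i ∈ s, (f i).natDegree ≤ d i) :
    reflect (∑ i ∈ s, d i) (∏ i ∈ s, f i) = ∏ i ∈ s, reflect (d i) (f i) := by
  classical
  induction s using Finset.induction_on with
  | empty => simp [reflect, ← C_1, -map_one]
  | insert a s ha ih =>
    obtain ⟨hfa, hfs⟩ := Finset.forall_mem_insert _ _ _ |>.mp hf
    rw [Finset.sum_insert ha, Finset.prod_insert ha, Finset.prod_insert ha, ← ih hfs,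
      reflect_mul _ _ hfa ((natDegree_prod_le s f).trans (Finset.sum_le_sum hfs))]

/-- For `y = x + x⁻¹`, the factor `(1 - u x)(1 - u x⁻¹) = 1 - u y + u ^ 2` of the reciprocal of the
generating function `∑ u ^ k h_k`; the formal variable `X` plays the role of `u`. -/
noncomputable def pairFactor [CommRing R] (y : R) : R[X] := X ^ 2 - C y * X + 1

variable [CommRing R]

lemma natDegree_pairFactor_le (y : R) : (pairFactor y).natDegree ≤ 2 := by
  rw [pairFactor]
  compute_degree

lemma reflect_pairFactor (y : R) : reflect 2 (pairFactor y) = pairFactor y := by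
  have reflect_X : reflect 2 (X : R[X]) = X := by
    simpa [revAt_le] using reflect_monomial (R := R) 2 1
  have reflect_one : reflect 2 (1 : R[X]) = X ^ 2 := by simp
  simp only [pairFactor, reflect_add, reflect_sub, reflect_C_mul, reflect_monomial, reflect_X,
    reflect_one, revAt_le le_rfl, Nat.sub_self, pow_zero]
  ring

lemma natDegree_prod_pairFactor_le {ι : Type*} (s : Finset ι) (y : ι → R) :
    (∏ i ∈ s, pairFactor (y i)).natDegree ≤ 2 * #s := by
  simpa [mul_comm] using (natDegree_prod_le s _).trans
    (Finset.sum_le_sum fun i _ => natDegree_pairFactor_le (y i))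

lemma coeff_prod_pairFactor_add_eq_sub {ι : Type*} (s : Finset ι) (y : ι → R) {r : ℕ}
    (hr : r ≤ #s) :
    (∏ i ∈ s, pairFactor (y i)).coeff (#s + r) = (∏ i ∈ s, pairFactor (y i)).coeff (#s - r) := by
  have palindromic : reflect (2 * #s) (∏ i ∈ s, pairFactor (y i)) = ∏ i ∈ s, pairFactor (y i) := by
    simpa [reflect_pairFactor, mul_comm] using
      reflect_prod s fun i _ => natDegree_pairFactor_le (y i)
  rw [← palindromic, coeff_reflect, palindromic, revAt_le (by omega)]
  congr 1
  omega

end Palindromic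

section GeneratingSeries

open PowerSeries

lemma mk_pow_mul_one_sub_C_mul_X {R : Type*} [CommRing R] (a : R) :
    (mk fun k => a ^ k) * (1 - C a * X) = 1 := by
  simpa [rescale_mk, rescale_X] using congrArg (rescale a) (mk_one_mul_one_sub_eq_one R)

lemma prod_mk_pow {R : Type*} [CommSemiring R] {N : ℕ} (z : Fin N → R) :
    ∏ a, (mk fun k => z a ^ k) =
      mk fun k => ∑ c ∈ Finset.Nat.antidiagonalTuple N k, ∏ a, z a ^ c a := by
  ext k
  simp only [coeff_prod, coeff_mk]
  exact Finset.sum_equiv Finsupp.equivFunOnFinite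
    (by simp [Finset.Nat.mem_antidiagonalTuple, Finset.mem_finsuppAntidiag]) (fun _ _ => rfl)

variable {F : Type*} [Field F] {n : ℕ}

lemma one_sub_mul_one_sub_eq_pairFactor {x : F} (hx : x ≠ 0) :
    (1 - C x * X) * (1 - C x⁻¹ * X) = (pairFactor (x + x⁻¹) : F⟦X⟧) := by
  have hC : C x * C x⁻¹ = 1 := by rw [← map_mul, mul_inv_cancel₀ hx, map_one]
  simp only [pairFactor, Polynomial.coe_add, Polynomial.coe_sub, Polynomial.coe_mul,
    Polynomial.coe_pow, Polynomial.coe_X, Polynomial.coe_C, Polynomial.coe_one, map_add]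
  linear_combination X ^ 2 * hC

lemma mk_pow_sub_inv_pow_mul_pairFactor {x : F} (hx : x ≠ 0) :
    (mk fun m => x ^ m - x⁻¹ ^ m) * (pairFactor (x + x⁻¹) : F⟦X⟧) = C (x - x⁻¹) * X := by
  have split : (mk fun m => x ^ m - x⁻¹ ^ m) = (mk fun m => x ^ m) - mk fun m => x⁻¹ ^ m := by
    ext; simp
  rw [split, ← one_sub_mul_one_sub_eq_pairFactor hx, map_sub]
  linear_combination (1 - C x⁻¹ * X) * mk_pow_mul_one_sub_C_mul_X x -
    (1 - C x * X) * mk_pow_mul_one_sub_C_mul_X x⁻¹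

lemma hComplete_of_neg (x : Fin n → F) {k : ℤ} (hk : k < 0) : hComplete x k = 0 :=
  if_pos hk

lemma hComplete_zero (x : Fin n → F) : hComplete x 0 = 1 := by
  simp [hComplete, Finset.Nat.antidiagonalTuple_zero_right]

/-- The generating function `∑ u ^ k h_k` of the complete symmetric functions in the `x i` and
`(x i)⁻¹`. -/
noncomputable def hCompleteSeries (x : Fin n → F) : F⟦X⟧ :=
  mk fun k => hComplete x k

lemma hCompleteSeries_eq_prod (x : Fin n → F) :
    hCompleteSeries x = ∏ i, (mk fun k => x i ^ k) * mk fun k => (x i)⁻¹ ^ k := by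
  have as_prod : hCompleteSeries x = ∏ a : Fin (2 * n), mk fun k =>
      (if h : (a : ℕ) < n then x ⟨a, h⟩ else (x ⟨(a : ℕ) - n, by omega⟩)⁻¹) ^ k := by
    rw [prod_mk_pow]
    ext k
    simp [hCompleteSeries, hComplete]
  rw [as_prod, ← (finCongr (two_mul n).symm).prod_comp, Fin.prod_univ_add,
    Finset.prod_mul_distrib]
  simp

lemma hCompleteSeries_mul_prod_pairFactor {x : Fin n → F} (hx : ∀ i, x i ≠ 0) :
    hCompleteSeries x * ∏ i, (pairFactor (x i + (x i)⁻¹) : F⟦X⟧) = 1 := by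
  rw [hCompleteSeries_eq_prod, ← Finset.prod_mul_distrib]
  refine Finset.prod_eq_one fun i _ => ?_
  rw [← one_sub_mul_one_sub_eq_pairFactor (hx i), mul_mul_mul_comm, mk_pow_mul_one_sub_C_mul_X,
    mk_pow_mul_one_sub_C_mul_X, one_mul]

lemma coeff_X_pow_mul_hCompleteSeries (x : Fin n → F) (d k : ℕ) :
    coeff k (X ^ d * hCompleteSeries x) = hComplete x (k - d) := by
  rw [coeff_X_pow_mul']
  split_ifs with hdk
  · simp [hCompleteSeries, Nat.cast_sub hdk]
  · rw [hComplete_of_neg x (by omega)]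

lemma coeff_X_mul_coe_mul_hCompleteSeries (x : Fin n → F) {p : Polynomial F} {N : ℕ}
    (hp : p.natDegree < N) (k : ℕ) :
    coeff k (X * ((p : F⟦X⟧) * hCompleteSeries x)) =
      ∑ r ∈ range N, p.coeff r * hComplete x (k - 1 - r) := by
  have expand : X * ((p : F⟦X⟧) * hCompleteSeries x) =
      ∑ r ∈ range N, C (p.coeff r) * (X ^ (r + 1) * hCompleteSeries x) := by
    conv_lhs => rw [p.as_sum_range' N hp]
    rw [← Polynomial.coeToPowerSeries.ringHom_apply, map_sum, Finset.sum_mul, Finset.mul_sum]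
    refine Finset.sum_congr rfl fun r _ => ?_
    rw [Polynomial.coeToPowerSeries.ringHom_apply, ← Polynomial.C_mul_X_pow_eq_monomial,
      Polynomial.coe_mul, Polynomial.coe_C, Polynomial.coe_pow, Polynomial.coe_X]
    ring
  rw [expand, map_sum]
  refine Finset.sum_congr rfl fun r _ => ?_
  rw [coeff_C_mul, coeff_X_pow_mul_hCompleteSeries]
  congr 2
  push_cast
  ring

lemma mk_pow_sub_inv_pow_eq {x : Fin n → F} (hx : ∀ i, x i ≠ 0) (i : Fin n) :
    (mk fun m => x i ^ m - (x i)⁻¹ ^ m) = C (x i - (x i)⁻¹) *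
      (X * (((∏ j ∈ univ.erase i, pairFactor (x j + (x j)⁻¹) : Polynomial F) : F⟦X⟧) *
        hCompleteSeries x)) := by
  have reciprocal := hCompleteSeries_mul_prod_pairFactor hx
  rw [← Finset.mul_prod_erase univ _ (Finset.mem_univ i)] at reciprocal
  rw [← Polynomial.coeToPowerSeries.ringHom_apply, map_prod]
  simp only [Polynomial.coeToPowerSeries.ringHom_apply]
  linear_combination
    (hCompleteSeries x * ∏ j ∈ univ.erase i, (pairFactor (x j + (x j)⁻¹) : F⟦X⟧)) *
        mk_pow_sub_inv_pow_mul_pairFactor (hx i) -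
      (mk fun m => x i ^ m - (x i)⁻¹ ^ m) * reciprocal

end GeneratingSeries

section Alternants

open Polynomial.Chebyshev

lemma isMonicOfDegree_chebyshev_S {R : Type*} [CommRing R] [Nontrivial R] :
    ∀ k : ℕ, (S R k).IsMonicOfDegree k
  | 0 => by simp [Polynomial.isMonicOfDegree_zero_iff]
  | 1 => by simpa using Polynomial.isMonicOfDegree_X R
  | k + 2 => by
    have lead : (Polynomial.X * S R (k + 1 : ℕ)).IsMonicOfDegree (k + 2) := by
      simpa [add_comm, add_left_comm] using
        (Polynomial.isMonicOfDegree_X R).mul (isMonicOfDegree_chebyshev_S (k + 1))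
    have lower : (S R k).natDegree < k + 2 := by
      rw [(isMonicOfDegree_chebyshev_S k).natDegree_eq]; omega
    simpa using lead.sub lower

variable {F : Type*} [Field F] {n : ℕ}

lemma sub_inv_mul_eval_chebyshev_S {x : F} (hx : x ≠ 0) :
    ∀ k : ℕ, (x - x⁻¹) * (S F k).eval (x + x⁻¹) = x ^ (k + 1) - x⁻¹ ^ (k + 1)
  | 0 => by simp
  | 1 => by
    simp only [Nat.cast_one, S_one, Polynomial.eval_X]
    ring
  | k + 2 => by
    have prev := sub_inv_mul_eval_chebyshev_S hx k
    have curr := sub_inv_mul_eval_chebyshev_S hx (k + 1)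
    push_cast at curr ⊢
    rw [S_add_two, Polynomial.eval_sub, Polynomial.eval_mul, Polynomial.eval_X]
    linear_combination (x + x⁻¹) * curr - prev +
      (x ^ (k + 1) - x⁻¹ ^ (k + 1)) * mul_inv_cancel₀ hx

/-- The Weyl denominator `δ` of type `C_n`, in product form. -/
def weylDenominator (x : Fin n → F) : F :=
  (∏ i, (x i - (x i)⁻¹)) * ∏ i, ∏ j ∈ Finset.Ioi i, (x i + (x i)⁻¹ - x j - (x j)⁻¹)

/-- The matrix whose determinant is the alternating sum `∑ ε(w) x ^ (w m)` over the Weyl group of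
type `C_n`. -/
def alternantMatrix (x : Fin n → F) (m : Fin n → ℤ) : Matrix (Fin n) (Fin n) F :=
  Matrix.of fun i j => x i ^ m j - x i ^ (-m j)

/-- The symplectic Jacobi–Trudi matrix of the weight `m - ρ`. Its columns, not its rows, are
indexed by the parts; with 0-based indices the column of `λ` at `j` starts with `h_{λ_j - j}`. -/
noncomputable def jacobiTrudiMatrix (x : Fin n → F) (m : Fin n → ℤ) : Matrix (Fin n) (Fin n) F :=
  Matrix.of fun i j => symmShift (hComplete x) i (m j - n)

lemma det_alternantMatrix (x : Fin n → F) (m : Fin n → ℤ) :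
    (alternantMatrix x m).det = ∑ π : Equiv.Perm (Fin n), ∑ ε : Fin n → Bool,
      ((Equiv.Perm.sign π : ℤ) : F) * (-1) ^ #{i | ε i = false} *
        ∏ i, x (π i) ^ (if ε i then m i else -m i) := by
  simp only [pow_ite]
  exact det_sub_eq_sum_perm_sum_bool (Matrix.of fun i j => x i ^ m j)
    (Matrix.of fun i j => x i ^ (-m j))

lemma det_alternantMatrix_rho {x : Fin n → F} (hx : ∀ i, x i ≠ 0) :
    (alternantMatrix x fun j => n - j).det = weylDenominator x := by
  have chebyshev : alternantMatrix x (fun j => n - j) = Matrix.of fun i j =>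
      (x i - (x i)⁻¹) * Matrix.of (fun i j : Fin n => (S F j.rev).eval (x i + (x i)⁻¹)) i j := by
    ext i j
    have rho : ((n : ℤ) - j) = (j.rev + 1 : ℕ) := by rw [Fin.val_rev]; omega
    simp only [alternantMatrix, Matrix.of_apply, rho, zpow_neg, zpow_natCast, ← inv_pow,
      sub_inv_mul_eval_chebyshev_S (hx i)]
  rw [chebyshev, Matrix.det_mul_column,
    det_eval_rev_of_isMonicOfDegree (fun k => S F k) isMonicOfDegree_chebyshev_S]
  simp only [weylDenominator, ← sub_sub]

end Alternants

section JacobiTrudi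

variable {F : Type*} [Field F] {n : ℕ}

lemma symmShift_hComplete_neg (x : Fin n → F) {i j : ℕ} (hij : i ≤ j) :
    symmShift (hComplete x) i (-j) = if i = j then 1 else 0 := by
  rcases hij.eq_or_lt with rfl | hlt
  · rcases eq_or_ne i 0 with rfl | hi
    · simp [symmShift_zero, hComplete_zero]
    · rw [symmShift_of_ne_zero _ hi, neg_add_cancel, hComplete_zero,
        hComplete_of_neg x (by omega), add_zero, if_pos rfl]
  · rw [if_neg hlt.ne, symmShift, hComplete_of_neg x (by omega), hComplete_of_neg x (by omega),
      hComplete_of_neg x (by omega), add_zero, ite_self]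

lemma jacobiTrudiMatrix_apply_of_eq_rho (x : Fin n → F) {m : Fin n → ℤ} {i j : Fin n}
    (hm : m j = n - j) (hij : i ≤ j) :
    jacobiTrudiMatrix x m i j = (1 : Matrix (Fin n) (Fin n) F) i j := by
  rw [jacobiTrudiMatrix, Matrix.of_apply, hm, sub_sub_cancel_left, symmShift_hComplete_neg x hij]
  simp only [Matrix.one_apply, Fin.ext_iff]

lemma zpow_sub_zpow_neg_eq_sum {x : Fin n → F} (hx : ∀ i, x i ≠ 0) (i : Fin n) {k : ℤ}
    (hk : 0 ≤ k) :
    x i ^ k - x i ^ (-k) = ∑ s : Fin n, (x i - (x i)⁻¹) *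
      (∏ j ∈ univ.erase i, pairFactor (x j + (x j)⁻¹)).coeff s.rev *
        symmShift (hComplete x) s (k - n) := by
  lift k to ℕ using hk
  obtain ⟨d, rfl⟩ : ∃ d, n = d + 1 := ⟨n - 1, by have := i.isLt; omega⟩
  have card_erase : #(univ.erase i) = d := by simp
  set p := ∏ j ∈ univ.erase i, pairFactor (x j + (x j)⁻¹) with hp
  have degree : p.natDegree < 2 * d + 1 := by
    simpa [hp, card_erase, Nat.lt_succ_iff] using
      natDegree_prod_pairFactor_le (univ.erase i) fun j => x j + (x j)⁻¹
  have palindromic : ∀ s ≤ d, p.coeff (d + s) = p.coeff (d - s) := fun s hs => by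
    simpa only [card_erase] using
      coeff_prod_pairFactor_add_eq_sub (univ.erase i) (fun j => x j + (x j)⁻¹)
        (hs.trans_eq card_erase.symm)
  have expansion := congrArg (PowerSeries.coeff k) (mk_pow_sub_inv_pow_eq hx i)
  rw [PowerSeries.coeff_mk, PowerSeries.coeff_C_mul, ← hp,
    coeff_X_mul_coe_mul_hCompleteSeries x degree,
    sum_mul_eq_sum_mul_symmShift palindromic, ← Fin.sum_univ_eq_sum_range
      (fun s => p.coeff (d - s) * symmShift (hComplete x) s (k - 1 - d))] at expansion
  rw [zpow_neg, zpow_natCast, ← inv_pow, expansion, Finset.mul_sum]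
  refine Finset.sum_congr rfl fun s _ => ?_
  rw [Fin.val_rev, Nat.add_sub_add_right, ← mul_assoc]
  congr 2
  push_cast
  ring

lemma exists_alternantMatrix_eq_mul_jacobiTrudiMatrix {x : Fin n → F} (hx : ∀ i, x i ≠ 0) :
    ∃ B : Matrix (Fin n) (Fin n) F, ∀ m : Fin n → ℤ, (∀ j, 0 ≤ m j) →
      alternantMatrix x m = B * jacobiTrudiMatrix x m := by
  refine ⟨Matrix.of fun i s => (x i - (x i)⁻¹) *
    (∏ j ∈ univ.erase i, pairFactor (x j + (x j)⁻¹)).coeff s.rev, fun m hm => ?_⟩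
  ext i j
  exact zpow_sub_zpow_neg_eq_sum hx i (hm j)

theorem det_alternantMatrix_eq_mul_det_jacobiTrudiMatrix {x : Fin n → F} (hx : ∀ i, x i ≠ 0)
    {m : Fin n → ℤ} (hm : ∀ j, 0 ≤ m j) :
    (alternantMatrix x m).det = weylDenominator x * (jacobiTrudiMatrix x m).det := by
  obtain ⟨B, hB⟩ := exists_alternantMatrix_eq_mul_jacobiTrudiMatrix hx
  -- The trivial weight `m = ρ`, whose Jacobi–Trudi matrix is unipotent, determines `det B`.
  have det_B : B.det = weylDenominator x := by
    rw [← det_alternantMatrix_rho hx, hB _ fun j => by omega, Matrix.det_mul,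
      det_eq_one_of_forall_le fun i j => jacobiTrudiMatrix_apply_of_eq_rho x rfl, mul_one]
  rw [hB m hm, Matrix.det_mul, det_B]

lemma wtRho_nonneg (lam1 lam2 : ℕ) (i : Fin n) : 0 ≤ wtRho n lam1 lam2 i := by
  rw [wtRho]
  positivity

lemma wtRho_of_two_le (lam1 lam2 : ℕ) {i : Fin n} (hi : 2 ≤ (i : ℕ)) :
    wtRho n lam1 lam2 i = n - i := by
  rw [wtRho, if_neg (by omega), if_neg (by omega)]
  omega

lemma det_jacobiTrudiMatrix_wtRho (hn : 2 ≤ n) (x : Fin n → F) (lam1 lam2 : ℕ) :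
    (jacobiTrudiMatrix x (wtRho n lam1 lam2)).det =
      hComplete x lam1 * hComplete x lam2 +
        hComplete x lam1 * hComplete x ((lam2 : ℤ) - 2) -
        hComplete x ((lam1 : ℤ) + 1) * hComplete x ((lam2 : ℤ) - 1) -
        hComplete x ((lam1 : ℤ) - 1) * hComplete x ((lam2 : ℤ) - 1) := by
  obtain ⟨N, rfl⟩ := Nat.exists_eq_add_of_le hn
  have first : wtRho (2 + N) lam1 lam2 (Fin.castAdd N 0) - (2 + N : ℕ) = lam1 := by
    simp [wtRho]
  have second : wtRho (2 + N) lam1 lam2 (Fin.castAdd N 1) - (2 + N : ℕ) = lam2 - 1 := by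
    rw [wtRho, Fin.val_castAdd, Fin.val_one, if_neg one_ne_zero, if_pos rfl]
    omega
  have unipotent (i j : Fin (2 + N)) (hj : 2 ≤ (j : ℕ)) (hij : i ≤ j) :
      jacobiTrudiMatrix x (wtRho (2 + N) lam1 lam2) i j = (1 : Matrix _ _ F) i j :=
    jacobiTrudiMatrix_apply_of_eq_rho x (wtRho_of_two_le lam1 lam2 hj) hij
  rw [det_eq_det_submatrix_castAdd unipotent, Matrix.det_fin_two]
  simp only [jacobiTrudiMatrix, Matrix.submatrix_apply, Matrix.of_apply, first, second,
    Fin.val_castAdd, Fin.val_zero, Fin.val_one, symmShift_zero,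
    symmShift_of_ne_zero _ one_ne_zero]
  rw [Nat.cast_one, sub_add_cancel, show (lam2 : ℤ) - 1 - 1 = lam2 - 2 by ring]
  ring

end JacobiTrudi

theorem stmt11_general {F : Type*} [Field F] {n : ℕ} (hn : 2 ≤ n) (x : Fin n → F)
    (hx : ∀ i, x i ≠ 0) (lam1 lam2 : ℕ) :
    ∑ π : Equiv.Perm (Fin n), ∑ ε : Fin n → Bool,
      ((Equiv.Perm.sign π : ℤ) : F) *
        (-1) ^ ((Finset.univ.filter (fun i => ε i = false)).card) *
        ∏ i, (x (π i)) ^ (if ε i then wtRho n lam1 lam2 i else -(wtRho n lam1 lam2 i))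
      = ((∏ i, (x i - (x i)⁻¹)) *
          ∏ i, ∏ j ∈ Finset.Ioi i, (x i + (x i)⁻¹ - x j - (x j)⁻¹)) *
        (hComplete x lam1 * hComplete x lam2 +
          hComplete x lam1 * hComplete x ((lam2 : ℤ) - 2) -
          hComplete x ((lam1 : ℤ) + 1) * hComplete x ((lam2 : ℤ) - 1) -
          hComplete x ((lam1 : ℤ) - 1) * hComplete x ((lam2 : ℤ) - 1)) := by
  rw [← det_alternantMatrix,
    det_alternantMatrix_eq_mul_det_jacobiTrudiMatrix hx (wtRho_nonneg lam1 lam2),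
    det_jacobiTrudiMatrix_wtRho hn, weylDenominator]

/-- Weyl's two-row symplectic character formula: with
`δ(x) = ∏_i (x_i - x_i⁻¹) ∏_{i<j} (x_i + x_i⁻¹ - x_j - x_j⁻¹)`, the alternating sum
`∑_{w ∈ W} ε(w) x^{w(λ+ρ)}` over the hyperoctahedral group equals
`δ · (h_{λ₁}h_{λ₂} + h_{λ₁}h_{λ₂-2} - h_{λ₁+1}h_{λ₂-1} - h_{λ₁-1}h_{λ₂-1})`,
i.e. `χ_{λ₁ε₁+λ₂ε₂} = h_{λ₁}h_{λ₂} + h_{λ₁}h_{λ₂-2} - h_{λ₁+1}h_{λ₂-1} - h_{λ₁-1}h_{λ₂-1}`. -/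
theorem stmt11 {F : Type*} [Field F] {n : ℕ} (hn : 2 ≤ n) (x : Fin n → F)
    (hx : ∀ i, x i ≠ 0) (lam1 lam2 : ℕ) (hlam : lam2 ≤ lam1) :
    ∑ π : Equiv.Perm (Fin n), ∑ ε : Fin n → Bool,
      ((Equiv.Perm.sign π : ℤ) : F) *
        (-1) ^ ((Finset.univ.filter (fun i => ε i = false)).card) *
        ∏ i, (x (π i)) ^ (if ε i then wtRho n lam1 lam2 i else -(wtRho n lam1 lam2 i))
      = ((∏ i, (x i - (x i)⁻¹)) *
          ∏ i, ∏ j ∈ Finset.Ioi i, (x i + (x i)⁻¹ - x j - (x j)⁻¹)) *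
        (hComplete x lam1 * hComplete x lam2 +
          hComplete x lam1 * hComplete x ((lam2 : ℤ) - 2) -
          hComplete x ((lam1 : ℤ) + 1) * hComplete x ((lam2 : ℤ) - 1) -
          hComplete x ((lam1 : ℤ) - 1) * hComplete x ((lam2 : ℤ) - 1)) :=
  stmt11_general hn x hx lam1 lam2
end
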